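/- arXiv:1901.06945 — 3 statements merged into one kernel-verified Lean document; each statement's English description precedes it below -/
import Mathlib

section
/- Set n₅ = 1, n₆ = 3, n₇ = 7, n₈ = 14. Let r ∈ {5,6,7,8} and let K ⊆ E be a set of r pairwise orthogonal roots. Then exactly n_r of the 4-element subsets {a,b,c,d} of K satisfy a + b + c + d ∈ 2Λ. -/
noncomputable section

/-- The standard dot product on ℝ^8. -/
def dot (a b : Fin 8 → ℝ) : ℝ := ∑ i, a i * b i

/-- Membership in the E8 lattice Λ: all coordinates are integers or all lie in ℤ + 1/2,
and the coordinates sum to an even integer. -/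
def inLambda (a : Fin 8 → ℝ) : Prop :=
  ((∀ i, ∃ n : ℤ, a i = n) ∨ (∀ i, ∃ n : ℤ, a i = n + 1 / 2)) ∧
    ∃ n : ℤ, (∑ i, a i) = 2 * n

/-- The E8 root system E: lattice vectors of squared norm 2. -/
def isRoot (a : Fin 8 → ℝ) : Prop := inLambda a ∧ dot a a = 2

/-- The Weyl group W: linear isometries of ℝ^8 mapping the root system E onto itself. -/
def IsWeyl (w : (Fin 8 → ℝ) ≃ₗ[ℝ] (Fin 8 → ℝ)) : Prop :=
  (∀ a b : Fin 8 → ℝ, dot (w a) (w b) = dot a b) ∧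
    (⇑w '' {a | isRoot a} = {a | isRoot a})

theorem half_dim {ι : Type*} [Fintype ι] [DecidableEq ι] (M N : Matrix ι ι (ZMod 2))
    (hMN : M * N = 1) (hs : M.transpose = M) (W : Submodule (ZMod 2) (ι → ZMod 2))
    (hW : ∀ x ∈ W, ∀ y ∈ W, x ⬝ᵥ M.mulVec y = 0) :
    2 * Module.finrank (ZMod 2) W ≤ Fintype.card ι ∧
    (2 * Module.finrank (ZMod 2) W = Fintype.card ι →
      ∀ y, (∀ x ∈ W, x ⬝ᵥ M.mulVec y = 0) → y ∈ W) := by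
  have hdet : M.det ≠ 0 := by
    intro h
    have := congrArg Matrix.det hMN
    rw [Matrix.det_mul, h] at this
    simp at this
  have hnd : (Matrix.toBilin' M).Nondegenerate :=
    LinearMap.BilinForm.nondegenerate_toBilin'_of_det_ne_zero' M hdet
  have hrefl : (Matrix.toBilin' M).IsRefl := by
    intro x y h
    rw [Matrix.toBilin'_apply'] at h ⊢
    rw [Matrix.dotProduct_mulVec, ← Matrix.mulVec_transpose, hs, dotProduct_comm]
    exact h
  have hfr := LinearMap.BilinForm.finrank_orthogonal hnd W
  rw [Module.finrank_fintype_fun_eq_card] at hfr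
  have hle : W ≤ (Matrix.toBilin' M).orthogonal W := by
    intro y hy
    rw [LinearMap.BilinForm.mem_orthogonal_iff]
    intro x hx
    show Matrix.toBilin' M x y = 0
    rw [Matrix.toBilin'_apply']
    exact hW x hx y hy
  have h1 := Submodule.finrank_mono hle
  have h2 := Submodule.finrank_le W
  rw [Module.finrank_fintype_fun_eq_card] at h2
  refine ⟨by omega, fun heq y hy => ?_⟩
  have : W = (Matrix.toBilin' M).orthogonal W :=
    Submodule.eq_of_le_of_finrank_eq hle (by omega)
  rw [this, LinearMap.BilinForm.mem_orthogonal_iff]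
  intro x hx
  show Matrix.toBilin' M x y = 0
  rw [Matrix.toBilin'_apply']
  exact hy x hx

def supp2 {ι : Type*} [Fintype ι] [DecidableEq ι] (c : ι → ZMod 2) : Finset ι :=
  Finset.univ.filter (fun i => c i = 1)

theorem z2 (a : ZMod 2) : a = 0 ∨ a = 1 := by revert a; decide

theorem code_count {ι : Type*} [Fintype ι] [DecidableEq ι] (r n : ℕ)
    (hrn : (r, n) ∈ ({(5, 1), (6, 3), (7, 7), (8, 14)} : Set (ℕ × ℕ)))
    (hr : Fintype.card ι = r)
    (C : Submodule (ZMod 2) (ι → ZMod 2))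
    (hw : ∀ c ∈ C, 4 ∣ (supp2 c).card)
    (hdim : r ≤ Module.finrank (ZMod 2) C + 4) :
    {c : ι → ZMod 2 | c ∈ C ∧ (supp2 c).card = 4}.ncard = n := by
  classical
  have hle : ∀ c : ι → ZMod 2, (supp2 c).card ≤ r := fun c => hr ▸ Finset.card_le_univ _
  have h0 : ∀ c : ι → ZMod 2, (supp2 c).card = 0 ↔ c = 0 := by
    intro c
    rw [Finset.card_eq_zero, supp2, Finset.filter_eq_empty_iff]
    constructor
    · intro h; funext i
      rcases z2 (c i) with h' | h'
      · exact h'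
      · exact absurd h' (h (Finset.mem_univ i))
    · rintro rfl i _; simp
  have h1 : ∀ c : ι → ZMod 2, (supp2 c).card = r ↔ c = 1 := by
    intro c
    rw [← hr, Finset.card_eq_iff_eq_univ, supp2, Finset.filter_eq_self]
    constructor
    · intro h; funext i; exact h i (Finset.mem_univ i)
    · rintro rfl i _; rfl
  have hadd : ∀ c d : ι → ZMod 2,
      (supp2 (c + d)).card + 2 * (supp2 c ∩ supp2 d).card = (supp2 c).card + (supp2 d).card := by
    intro c d
    have : supp2 (c + d) = (supp2 c \ supp2 d) ∪ (supp2 d \ supp2 c) := by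
      ext i
      simp only [supp2, Finset.mem_filter, Finset.mem_union, Finset.mem_sdiff, Finset.mem_univ,
        true_and, Pi.add_apply]
      generalize c i = a
      generalize d i = b
      revert a b; decide
    rw [this, Finset.card_union_of_disjoint]
    · have a1 := Finset.card_sdiff_add_card_inter (supp2 c) (supp2 d)
      have a2 := Finset.card_sdiff_add_card_inter (supp2 d) (supp2 c)
      rw [Finset.inter_comm] at a2
      omega
    · rw [Finset.disjoint_left]; intro i; simp; tauto
  have hdot : ∀ c d : ι → ZMod 2, c ⬝ᵥ d = ((supp2 c ∩ supp2 d).card : ZMod 2) := by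
    intro c d
    rw [Finset.card_eq_sum_ones, Nat.cast_sum, supp2, supp2, ← Finset.filter_and, Finset.sum_filter,
      dotProduct]
    apply Finset.sum_congr rfl
    intro i _
    generalize c i = a
    generalize d i = b
    revert a b; decide
  have hself : ∀ x ∈ C, ∀ y ∈ C, x ⬝ᵥ (1 : Matrix ι ι (ZMod 2)).mulVec y = 0 := by
    intro x hx y hy
    rw [Matrix.one_mulVec, hdot, ZMod.natCast_eq_zero_iff]
    have := hadd x y
    have := hw x hx
    have := hw y hy
    have := hw _ (C.add_mem hx hy)
    omega
  obtain ⟨hh1, hh2⟩ := half_dim 1 1 (by simp) (by simp) C hself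
  rw [hr] at hh1 hh2
  have hone : 2 * Module.finrank (ZMod 2) C = r → (1 : ι → ZMod 2) ∈ C := by
    intro h
    apply hh2 h
    intro x hx
    rw [Matrix.one_mulVec, hdot, ZMod.natCast_eq_zero_iff]
    have : supp2 (1 : ι → ZMod 2) = Finset.univ := by ext; simp [supp2]
    rw [this, Finset.inter_univ]
    have := hw x hx
    omega
  have hcard : (C : Set (ι → ZMod 2)).ncard = 2 ^ Module.finrank (ZMod 2) C := by
    have := Module.natCard_eq_pow_finrank (K := ZMod 2) (V := C)
    rw [Nat.card_zmod] at this
    exact this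
  have hfin : (C : Set (ι → ZMod 2)).Finite := Set.toFinite _
  have key : r ≤ 7 → {c : ι → ZMod 2 | c ∈ C ∧ (supp2 c).card = 4} =
      (C : Set (ι → ZMod 2)) \ {0} := by
    intro h7
    ext c
    simp only [Set.mem_ofPred_eq, Set.mem_sdiff, SetLike.mem_coe, Set.mem_singleton_iff]
    constructor
    · rintro ⟨a, b⟩; refine ⟨a, ?_⟩; rw [← h0]; omega
    · rintro ⟨a, b⟩; refine ⟨a, ?_⟩; rw [← h0] at b
      have := hw c a
      have := hle c
      omega
  have key2 : r ≤ 7 → {c : ι → ZMod 2 | c ∈ C ∧ (supp2 c).card = 4}.ncard =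
      2 ^ Module.finrank (ZMod 2) C - 1 := by
    intro h7
    rw [key h7, Set.ncard_sdiff_singleton_of_mem (C.zero_mem), hcard]
  simp only [Set.mem_insert_iff, Set.mem_singleton_iff, Prod.mk.injEq] at hrn
  rcases hrn with ⟨rfl, rfl⟩ | ⟨rfl, rfl⟩ | ⟨rfl, rfl⟩ | ⟨rfl, rfl⟩
  · apply le_antisymm
    · rw [Set.ncard_le_one (Set.toFinite _)]
      rintro a ⟨ha, ha4⟩ b ⟨hb, hb4⟩
      have e1 := hadd a b
      have e2 := hw _ (C.add_mem ha hb)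
      have e3 := Finset.card_union_add_card_inter (supp2 a) (supp2 b)
      have e4 : (supp2 a ∪ supp2 b).card ≤ 5 := hr ▸ Finset.card_le_univ _
      have e5 : (supp2 (a + b)).card = 0 := by omega
      rw [h0] at e5
      funext i
      have := congrFun e5 i
      simp only [Pi.add_apply, Pi.zero_apply] at this
      revert this
      generalize a i = u
      generalize b i = v
      revert u v; decide
    · rw [key2 (by norm_num)]
      have : 2 ^ 1 ≤ 2 ^ Module.finrank (ZMod 2) C := Nat.pow_le_pow_right (by norm_num) (by omega)
      omega
  · have hne : 2 * Module.finrank (ZMod 2) C ≠ 6 := by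
      intro h
      have h6 := hw _ (hone h)
      rw [(h1 1).2 rfl] at h6
      omega
    rw [key2 (by norm_num), show Module.finrank (ZMod 2) C = 2 by omega]
    norm_num
  · rw [key2 (by norm_num), show Module.finrank (ZMod 2) C = 3 by omega]
    norm_num
  · have hd : Module.finrank (ZMod 2) C = 4 := by omega
    have : {c : ι → ZMod 2 | c ∈ C ∧ (supp2 c).card = 4} =
      ((C : Set (ι → ZMod 2)) \ {0}) \ {1} := by
      ext c
      simp only [Set.mem_ofPred_eq, Set.mem_sdiff, SetLike.mem_coe, Set.mem_singleton_iff]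
      rw [← h0, ← h1]
      constructor
      · rintro ⟨a, b⟩; refine ⟨⟨a, ?_⟩, ?_⟩ <;> omega
      · rintro ⟨⟨a, b⟩, b'⟩; refine ⟨a, ?_⟩
        have := hw c a
        have := hle c
        omega
    have h10 : (1 : ι → ZMod 2) ∈ (C : Set (ι → ZMod 2)) \ {0} := by
      refine ⟨hone (by omega), ?_⟩
      intro h
      have h' := (h0 1).2 h
      rw [(h1 1).2 rfl] at h'
      omega
    rw [this, Set.ncard_sdiff_singleton_of_mem h10,
      Set.ncard_sdiff_singleton_of_mem (C.zero_mem), hcard, hd]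
    norm_num

def Lmap : (Fin 8 → ℝ) →ₗ[ℝ] (Fin 8 → ℝ) where
  toFun y := ![2 * y 0 - y 1 + y 7 / 2, y 1 - y 2 + y 7 / 2, y 2 - y 3 + y 7 / 2,
    y 3 - y 4 + y 7 / 2, y 4 - y 5 + y 7 / 2, y 5 - y 6 + y 7 / 2, y 6 + y 7 / 2, y 7 / 2]
  map_add' x y := by ext i; fin_cases i <;> simp <;> ring
  map_smul' c y := by ext i; fin_cases i <;> simp <;> ring

theorem Lmap_apply (y : Fin 8 → ℝ) : Lmap y =
    ![2 * y 0 - y 1 + y 7 / 2, y 1 - y 2 + y 7 / 2, y 2 - y 3 + y 7 / 2,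
    y 3 - y 4 + y 7 / 2, y 4 - y 5 + y 7 / 2, y 5 - y 6 + y 7 / 2, y 6 + y 7 / 2, y 7 / 2] := rfl

theorem Lmap_inj : Function.Injective Lmap := by
  rw [injective_iff_map_eq_zero]
  intro y h
  have h0 := congrFun h 0
  have h1 := congrFun h 1
  have h2 := congrFun h 2
  have h3 := congrFun h 3
  have h4 := congrFun h 4
  have h5 := congrFun h 5
  have h6 := congrFun h 6
  have h7 := congrFun h 7
  simp [Lmap_apply] at h0 h1 h2 h3 h4 h5 h6 h7
  ext i
  fin_cases i <;> simp <;> linarith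

theorem inLambda_iff (a : Fin 8 → ℝ) :
    inLambda a ↔ ∃ y : Fin 8 → ℤ, a = Lmap (fun i => (y i : ℝ)) := by
  have fwd : ∀ (m : Fin 8 → ℤ) (p n : ℤ), (∀ i, a i = m i + p / 2) → (∑ i, a i) = 2 * n →
      ∃ y : Fin 8 → ℤ, a = Lmap (fun i => (y i : ℝ)) := by
    intro m p n h hs
    simp only [Fin.sum_univ_eight] at hs
    have h0 := h 0
    have h1 := h 1
    have h2 := h 2
    have h3 := h 3
    have h4 := h 4
    have h5 := h 5
    have h6 := h 6
    have h7 := h 7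
    refine ⟨![n - 4 * m 7 - 2 * p, m 1 + m 2 + m 3 + m 4 + m 5 + m 6 - 6 * m 7,
      m 2 + m 3 + m 4 + m 5 + m 6 - 5 * m 7, m 3 + m 4 + m 5 + m 6 - 4 * m 7,
      m 4 + m 5 + m 6 - 3 * m 7, m 5 + m 6 - 2 * m 7, m 6 - m 7, 2 * m 7 + p], ?_⟩
    ext i
    fin_cases i <;> simp [Lmap_apply] <;> linarith
  constructor
  · rintro ⟨h | h, n, hn⟩
    · choose m hm using h
      exact fwd m 0 n (fun i => by rw [hm i]; simp) hn
    · choose m hm using h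
      exact fwd m 1 n (fun i => by rw [hm i]; simp) hn
  · rintro ⟨y, rfl⟩
    constructor
    · rcases Int.even_or_odd' (y 7) with ⟨k, hk | hk⟩
      · left
        have hk' : (y 7 : ℝ) = 2 * k := by exact_mod_cast hk
        intro i
        refine ⟨![2 * y 0 - y 1 + k, y 1 - y 2 + k, y 2 - y 3 + k,
          y 3 - y 4 + k, y 4 - y 5 + k, y 5 - y 6 + k, y 6 + k, k] i, ?_⟩
        fin_cases i <;> simp [Lmap_apply, hk']
      · right
        have hk' : (y 7 : ℝ) = 2 * k + 1 := by exact_mod_cast hk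
        intro i
        refine ⟨![2 * y 0 - y 1 + k, y 1 - y 2 + k, y 2 - y 3 + k,
          y 3 - y 4 + k, y 4 - y 5 + k, y 5 - y 6 + k, y 6 + k, k] i, ?_⟩
        fin_cases i <;> simp [Lmap_apply, hk'] <;> ring
    · refine ⟨y 0 + 2 * y 7, ?_⟩
      simp [Lmap_apply, Fin.sum_univ_eight]
      ring

def Gram : Matrix (Fin 8) (Fin 8) ℤ :=
  !![4, -2, 0, 0, 0, 0, 0, 1;
     -2, 2, -1, 0, 0, 0, 0, 0;
     0, -1, 2, -1, 0, 0, 0, 0;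
     0, 0, -1, 2, -1, 0, 0, 0;
     0, 0, 0, -1, 2, -1, 0, 0;
     0, 0, 0, 0, -1, 2, -1, 0;
     0, 0, 0, 0, 0, -1, 2, 0;
     1, 0, 0, 0, 0, 0, 0, 2]

theorem dot_Lmap (y z : Fin 8 → ℤ) :
    dot (Lmap (fun i => (y i : ℝ))) (Lmap (fun i => (z i : ℝ))) =
      ((y ⬝ᵥ Gram.mulVec z : ℤ) : ℝ) := by
  simp [dot, Lmap_apply, Gram, dotProduct, Matrix.mulVec, Fin.sum_univ_eight]
  ring

theorem dot_even (y : Fin 8 → ℤ) : ∃ q : ℤ, y ⬝ᵥ Gram.mulVec y = 2 * q := by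
  refine ⟨2 * y 0 ^ 2 + y 1 ^ 2 + y 2 ^ 2 + y 3 ^ 2 + y 4 ^ 2 + y 5 ^ 2 + y 6 ^ 2 + y 7 ^ 2
    - 2 * y 0 * y 1 - y 1 * y 2 - y 2 * y 3 - y 3 * y 4 - y 4 * y 5 - y 5 * y 6 + y 0 * y 7, ?_⟩
  simp [Gram, dotProduct, Matrix.mulVec, Fin.sum_univ_eight]
  ring

def Gram2 : Matrix (Fin 8) (Fin 8) (ZMod 2) := Gram.map (Int.castRingHom (ZMod 2))

def Gram2inv : Matrix (Fin 8) (Fin 8) (ZMod 2) :=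
  !![0, 0, 0, 0, 0, 0, 0, 1;
     0, 0, 1, 0, 1, 0, 1, 0;
     0, 1, 0, 0, 0, 0, 0, 0;
     0, 0, 0, 0, 1, 0, 1, 0;
     0, 1, 0, 1, 0, 0, 0, 0;
     0, 0, 0, 0, 0, 0, 1, 0;
     0, 1, 0, 1, 0, 1, 0, 0;
     1, 0, 0, 0, 0, 0, 0, 0]

theorem Gram2_mul : Gram2 * Gram2inv = 1 := by decide

theorem Gram2_symm : Gram2.transpose = Gram2 := by decide

theorem Gram2_cast (y z : Fin 8 → ℤ) :
    (fun i => (y i : ZMod 2)) ⬝ᵥ Gram2.mulVec (fun i => (z i : ZMod 2)) =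
      ((y ⬝ᵥ Gram.mulVec z : ℤ) : ZMod 2) := by
  simp [Gram2, dotProduct, Matrix.mulVec]

/-- With `n₅ = 1`, `n₆ = 3`, `n₇ = 7`, `n₈ = 14`: if `K` is a set of
`r ∈ {5,6,7,8}` pairwise orthogonal roots, then exactly `n_r` of the 4-element
subsets of `K` have their four elements summing to an element of `2Λ`. -/
theorem stmt_11 (r n : ℕ)
    (hrn : (r, n) ∈ ({(5, 1), (6, 3), (7, 7), (8, 14)} : Set (ℕ × ℕ)))
    (K : Finset (Fin 8 → ℝ)) (hcard : K.card = r)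
    (hroot : ∀ e ∈ K, isRoot e)
    (horth : ∀ e ∈ K, ∀ f ∈ K, e ≠ f → dot e f = 0) :
    {s : Finset (Fin 8 → ℝ) | s ⊆ K ∧ s.card = 4 ∧
      ∃ x, inLambda x ∧ (∑ e ∈ s, e) = (2 : ℝ) • x}.ncard = n := by
  classical
  have hy : ∀ e : K, ∃ y : Fin 8 → ℤ, e.1 = Lmap (fun i => (y i : ℝ)) := fun e =>
    (inLambda_iff _).1 (hroot e.1 e.2).1
  choose y hy using hy
  let φ := Fintype.linearCombination (ZMod 2) (fun (e : K) (i : Fin 8) => (y e i : ZMod 2))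
  have hφ : ∀ c, φ c = ∑ e, c e • (fun (i : Fin 8) => (y e i : ZMod 2)) := fun c =>
    Fintype.linearCombination_apply _ _ _
  have hφ2 : ∀ c i, φ c i = ((∑ e ∈ supp2 c, y e i : ℤ) : ZMod 2) := by
    intro c i
    rw [hφ, Finset.sum_apply, Int.cast_sum, supp2, Finset.sum_filter]
    apply Finset.sum_congr rfl
    intro e _
    simp only [Pi.smul_apply, smul_eq_mul]
    rcases z2 (c e) with h | h <;> simp [h]
  have hsum : ∀ s : Finset K, ∑ e ∈ s, e.1 = Lmap (fun i => ((∑ e ∈ s, y e i : ℤ) : ℝ)) := by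
    intro s
    rw [Finset.sum_congr rfl (fun e _ => hy e), ← map_sum]
    congr 1
    ext i
    simp
  have hmem : ∀ c, c ∈ LinearMap.ker φ ↔
      ∃ x, inLambda x ∧ (∑ e ∈ supp2 c, e.1) = (2 : ℝ) • x := by
    intro c
    rw [LinearMap.mem_ker]
    constructor
    · intro h
      have h2 : ∀ i, ∃ z : ℤ, ∑ e ∈ supp2 c, y e i = 2 * z := by
        intro i
        have := congrFun h i
        rw [hφ2, Pi.zero_apply, ZMod.intCast_zmod_eq_zero_iff_dvd] at this
        exact this
      choose z hz using h2
      refine ⟨Lmap (fun i => (z i : ℝ)), (inLambda_iff _).2 ⟨z, rfl⟩, ?_⟩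
      rw [hsum, ← map_smul]
      congr 1
      ext i
      rw [hz i]
      simp
    · rintro ⟨x, hx, h⟩
      obtain ⟨z, rfl⟩ := (inLambda_iff _).1 hx
      rw [hsum, ← map_smul] at h
      have h := Lmap_inj h
      ext i
      have h := congrFun h i
      simp only [Pi.smul_apply, smul_eq_mul] at h
      have h' : ∑ e ∈ supp2 c, y e i = 2 * z i := by exact_mod_cast h
      rw [hφ2, h', Pi.zero_apply, ZMod.intCast_zmod_eq_zero_iff_dvd]
      exact ⟨z i, rfl⟩
  have hdot : ∀ e f : K, dot e.1 f.1 = if e = f then 2 else 0 := by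
    intro e f
    split_ifs with h
    · subst h; exact (hroot e.1 e.2).2
    · exact horth _ e.2 _ f.2 (fun h' => h (Subtype.ext h'))
  have hw : ∀ c ∈ LinearMap.ker φ, 4 ∣ (supp2 c).card := by
    intro c hc
    obtain ⟨x, hx, h⟩ := (hmem c).1 hc
    obtain ⟨z, rfl⟩ := (inLambda_iff _).1 hx
    obtain ⟨q, hq⟩ := dot_even z
    have hd := dot_Lmap z z
    rw [hq] at hd
    have e1 : dot (∑ e ∈ supp2 c, e.1) (∑ e ∈ supp2 c, e.1) = 2 * (supp2 c).card := by
      change (∑ e ∈ supp2 c, e.1) ⬝ᵥ (∑ e ∈ supp2 c, e.1) = _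
      rw [sum_dotProduct]
      have : ∀ e ∈ supp2 c, e.1 ⬝ᵥ (∑ f ∈ supp2 c, f.1) = (2 : ℝ) := by
        intro e he
        rw [dotProduct_sum]
        change ∑ f ∈ supp2 c, dot e.1 f.1 = 2
        simp [hdot, he]
      rw [Finset.sum_congr rfl this]
      simp [mul_comm]
    rw [h] at e1
    have e2 : ∀ v : Fin 8 → ℝ, dot ((2 : ℝ) • v) ((2 : ℝ) • v) = 4 * dot v v := by
      intro v
      simp only [dot, Pi.smul_apply, smul_eq_mul, Finset.mul_sum]
      exact Finset.sum_congr rfl (fun i _ => by ring)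
    rw [e2, hd] at e1
    have e3 : 4 * (2 * q) = 2 * ((supp2 c).card : ℤ) := by exact_mod_cast e1
    omega
  have hiso := (half_dim Gram2 Gram2inv Gram2_mul Gram2_symm (LinearMap.range φ) (by
    rintro _ ⟨c, rfl⟩ _ ⟨d, rfl⟩
    rw [hφ, hφ, sum_dotProduct]
    apply Finset.sum_eq_zero
    intro e _
    rw [Matrix.mulVec_sum, dotProduct_sum]
    apply Finset.sum_eq_zero
    intro f _
    rw [Matrix.mulVec_smul, smul_dotProduct, dotProduct_smul, Gram2_cast]
    have h1 := dot_Lmap (y e) (y f)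
    rw [← hy, ← hy, hdot] at h1
    have h2 : ((y e ⬝ᵥ Gram.mulVec (y f) : ℤ) : ZMod 2) = 0 := by
      rw [ZMod.intCast_zmod_eq_zero_iff_dvd]
      split_ifs at h1
      · exact ⟨1, by exact_mod_cast h1.symm⟩
      · exact ⟨0, by exact_mod_cast h1.symm⟩
    rw [h2]; simp)).1
  have hrk := LinearMap.finrank_range_add_finrank_ker φ
  have hK : Fintype.card K = r := by rw [Fintype.card_coe, hcard]
  rw [Module.finrank_fintype_fun_eq_card, hK] at hrk
  rw [Fintype.card_fin] at hiso
  rw [← code_count r n hrn hK (LinearMap.ker φ) hw (by omega)]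
  let g : (K → ZMod 2) → Finset (Fin 8 → ℝ) := fun c =>
    (supp2 c).map (Function.Embedding.subtype _)
  have hg : Function.Injective g := by
    intro c d h
    have h := Finset.map_injective _ h
    funext e
    have h := congrArg (fun s => e ∈ s) h
    simp only [supp2, Finset.mem_filter, Finset.mem_univ, true_and, eq_iff_iff] at h
    revert h
    generalize c e = a
    generalize d e = b
    revert a b; decide
  rw [← Set.ncard_image_of_injective _ hg]
  congr 1
  ext s
  simp only [Set.mem_ofPred_eq, Set.mem_image]
  constructor
  · rintro ⟨hs, h4, hx⟩
    have hgs : g (fun e => if e.1 ∈ s then 1 else 0) = s := by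
      ext v
      simp only [g, supp2, Finset.mem_map, Finset.mem_filter, Finset.mem_univ, true_and]
      constructor
      · rintro ⟨e, he, rfl⟩
        by_contra h
        simp at h
        simp [h] at he
      · intro hv
        exact ⟨⟨v, hs hv⟩, by simp [hv], rfl⟩
    refine ⟨_, ⟨?_, ?_⟩, hgs⟩
    · rw [hmem]
      rw [← hgs] at hx
      simp only [g, Finset.sum_map] at hx
      exact hx
    · rw [← hgs] at h4
      simp only [g, Finset.card_map] at h4
      exact h4
  · rintro ⟨c, ⟨hc, h4⟩, rfl⟩
    refine ⟨?_, ?_, ?_⟩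
    · intro v hv
      simp only [g, Finset.mem_map] at hv
      obtain ⟨e, _, rfl⟩ := hv
      exact e.2
    · simp only [g, Finset.card_map]; exact h4
    · simp only [g, Finset.sum_map]
      exact (hmem c).1 hc
end
end

section
/- Let 5 ≤ r ≤ 8 and let (e1,…,er) and (f1,…,fr) be r-tuples of roots with e_i·e_j = 0 and f_i·f_j = 0 for all i ≠ j. Then there exists w ∈ W with w(e_i) = f_i for all i ∈ {1,…,r} if and only if for all 1 ≤ i < j < k < l ≤ r there exists w' ∈ W with w'(e_i) = f_i, w'(e_j) = f_j, w'(e_k) = f_k and w'(e_l) = f_l. -/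
noncomputable section

namespace E8

lemma dot_add_left (a b c : Fin 8 → ℝ) : dot (a + b) c = dot a c + dot b c := by
  simp [dot, add_mul, Finset.sum_add_distrib]

lemma dot_smul_left (t : ℝ) (a c : Fin 8 → ℝ) : dot (t • a) c = t * dot a c := by
  simp [dot, Finset.mul_sum, mul_assoc]

lemma dot_comm (a b : Fin 8 → ℝ) : dot a b = dot b a := by
  simp [dot, mul_comm]

/-- The dot product against a fixed vector, as a linear form. -/
def dotL (c : Fin 8 → ℝ) : (Fin 8 → ℝ) →ₗ[ℝ] ℝ where
  toFun a := dot a c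
  map_add' a b := dot_add_left a b c
  map_smul' t a := dot_smul_left t a c

lemma dotL_apply (c a : Fin 8 → ℝ) : dotL c a = dot a c := rfl

lemma dot_sub_left (a b c : Fin 8 → ℝ) : dot (a - b) c = dot a c - dot b c :=
  map_sub (dotL c) a b

lemma dot_neg_left (a c : Fin 8 → ℝ) : dot (-a) c = -dot a c := map_neg (dotL c) a

lemma dot_sum_left {ι : Type*} (S : Finset ι) (v : ι → Fin 8 → ℝ) (c : Fin 8 → ℝ) :
    dot (∑ i ∈ S, v i) c = ∑ i ∈ S, dot (v i) c := map_sum (dotL c) v S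

lemma dot_self_eq_zero {a : Fin 8 → ℝ} (h : dot a a = 0) : a = 0 := by
  unfold dot at h
  rw [Finset.sum_eq_zero_iff_of_nonneg (fun i _ => mul_self_nonneg (a i))] at h
  funext i
  exact mul_self_eq_zero.1 (h i (Finset.mem_univ i))

lemma lam_iff (a : Fin 8 → ℝ) : inLambda a ↔
    ∃ (n : Fin 8 → ℤ) (h k : ℤ), (∀ i, a i = n i + (h : ℝ) / 2) ∧ ∑ i, n i + 4 * h = 2 * k := by
  constructor
  · rintro ⟨h | h, k, hk⟩
    · choose n hn using h
      refine ⟨n, 0, k, fun i => by simp [hn], ?_⟩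
      simp only [hn] at hk
      have : (∑ i, n i) = 2 * k := by exact_mod_cast hk
      omega
    · choose n hn using h
      refine ⟨n, 1, k, fun i => by simp [hn], ?_⟩
      simp only [hn, Finset.sum_add_distrib] at hk
      simp at hk
      have h2 : ((∑ i, n i : ℤ) : ℝ) + 4 = 2 * k := by push_cast; linarith
      have : (∑ i, n i) + 4 = 2 * k := by exact_mod_cast h2
      omega
  · rintro ⟨n, h, k, hn, hk⟩
    constructor
    · rcases Int.even_or_odd' h with ⟨t, rfl | rfl⟩
      · left
        intro i
        exact ⟨n i + t, by rw [hn]; push_cast; ring⟩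
      · right
        intro i
        exact ⟨n i + t, by rw [hn]; push_cast; ring⟩
    · refine ⟨k, ?_⟩
      simp only [hn, Finset.sum_add_distrib]
      have : ((∑ i, n i + 4 * h : ℤ) : ℝ) = 2 * k := by rw [hk]; push_cast; rfl
      push_cast at this
      simp
      linarith

lemma lam_add {a b : Fin 8 → ℝ} (ha : inLambda a) (hb : inLambda b) : inLambda (a + b) := by
  rw [lam_iff] at *
  obtain ⟨n, h, k, hn, hk⟩ := ha
  obtain ⟨n', h', k', hn', hk'⟩ := hb
  refine ⟨n + n', h + h', k + k', fun i => ?_, ?_⟩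
  · simp [hn, hn']; ring
  · simp only [Pi.add_apply, Finset.sum_add_distrib]; linarith

lemma lam_zsmul {a : Fin 8 → ℝ} (m : ℤ) (ha : inLambda a) : inLambda ((m : ℝ) • a) := by
  rw [lam_iff] at *
  obtain ⟨n, h, k, hn, hk⟩ := ha
  refine ⟨m • n, m * h, m * k, fun i => ?_, ?_⟩
  · simp [hn]; ring
  · simp only [Pi.smul_apply, smul_eq_mul, ← Finset.mul_sum]
    linear_combination m * hk

lemma lam_sub {a b : Fin 8 → ℝ} (ha : inLambda a) (hb : inLambda b) : inLambda (a - b) := by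
  have := lam_add ha (lam_zsmul (-1) hb)
  simpa [sub_eq_add_neg] using this

lemma lam_zero : inLambda 0 := by
  rw [lam_iff]
  exact ⟨0, 0, 0, by simp, by simp⟩

lemma lam_sum {ι : Type*} (S : Finset ι) (v : ι → Fin 8 → ℝ) (h : ∀ i ∈ S, inLambda (v i)) :
    inLambda (∑ i ∈ S, v i) :=
  Finset.sum_induction v inLambda (fun _ _ => lam_add) lam_zero h

lemma lam_dot {a b : Fin 8 → ℝ} (ha : inLambda a) (hb : inLambda b) : ∃ n : ℤ, dot a b = n := by
  rw [lam_iff] at *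
  obtain ⟨n, h, k, hn, hk⟩ := ha
  obtain ⟨n', h', k', hn', hk'⟩ := hb
  refine ⟨∑ i, n i * n' i + h' * k + h * k' - 2 * h * h', ?_⟩
  have e1 : ((∑ i, n i + 4 * h : ℤ) : ℝ) = 2 * k := by rw [hk]; push_cast; rfl
  have e2 : ((∑ i, n' i + 4 * h' : ℤ) : ℝ) = 2 * k' := by rw [hk']; push_cast; rfl
  simp only [Fin.sum_univ_eight] at *
  simp only [dot, hn, hn', Fin.sum_univ_eight]
  push_cast at *
  linear_combination (h' : ℝ) / 2 * e1 + (h : ℝ) / 2 * e2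

lemma lam_even {a : Fin 8 → ℝ} (ha : inLambda a) : ∃ n : ℤ, dot a a = 2 * n := by
  rw [lam_iff] at *
  obtain ⟨n, h, k, hn, hk⟩ := ha
  have hs : ∀ i, ∃ t, n i * n i = n i + 2 * t := by
    intro i
    obtain ⟨t, ht⟩ := Int.even_mul_pred_self (n i)
    exact ⟨t, by linear_combination ht⟩
  choose t ht using hs
  refine ⟨∑ i, t i + k - 2 * h + h * k - h * h, ?_⟩
  have e1 : ((∑ i, n i + 4 * h : ℤ) : ℝ) = 2 * k := by rw [hk]; push_cast; rfl
  have e3 : ∀ i, (n i : ℝ) * n i = n i + 2 * t i := fun i => by exact_mod_cast ht i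
  have e4 : ∑ i, (n i : ℝ) * n i = ∑ i, (n i : ℝ) + 2 * ∑ i, (t i : ℝ) := by
    simp only [e3, Finset.sum_add_distrib, Finset.mul_sum]
  simp only [Fin.sum_univ_eight] at *
  simp only [dot, hn, Fin.sum_univ_eight]
  push_cast at *
  linear_combination (1 + h : ℝ) * e1 + e4

/-- Simple roots. -/
def al : Fin 8 → Fin 8 → ℝ :=
  ![![1/2, -1/2, -1/2, -1/2, -1/2, -1/2, -1/2, 1/2], ![1, 1, 0, 0, 0, 0, 0, 0],
    ![-1, 1, 0, 0, 0, 0, 0, 0], ![0, -1, 1, 0, 0, 0, 0, 0], ![0, 0, -1, 1, 0, 0, 0, 0],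
    ![0, 0, 0, -1, 1, 0, 0, 0], ![0, 0, 0, 0, -1, 1, 0, 0], ![0, 0, 0, 0, 0, -1, 1, 0]]

/-- Fundamental weights. -/
def om : Fin 8 → Fin 8 → ℝ :=
  ![![0, 0, 0, 0, 0, 0, 0, 2], ![1/2, 1/2, 1/2, 1/2, 1/2, 1/2, 1/2, 5/2],
    ![-1/2, 1/2, 1/2, 1/2, 1/2, 1/2, 1/2, 7/2], ![0, 0, 1, 1, 1, 1, 1, 5],
    ![0, 0, 0, 1, 1, 1, 1, 4], ![0, 0, 0, 0, 1, 1, 1, 3],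
    ![0, 0, 0, 0, 0, 1, 1, 2], ![0, 0, 0, 0, 0, 0, 1, 1]]

/-- Gram matrix. -/
def gram : Matrix (Fin 8) (Fin 8) ℤ :=
  !![2, 0, -1, 0, 0, 0, 0, 0; 0, 2, 0, -1, 0, 0, 0, 0; -1, 0, 2, -1, 0, 0, 0, 0;
    0, -1, -1, 2, -1, 0, 0, 0; 0, 0, 0, -1, 2, -1, 0, 0; 0, 0, 0, 0, -1, 2, -1, 0;
    0, 0, 0, 0, 0, -1, 2, -1; 0, 0, 0, 0, 0, 0, -1, 2]

/-- Inverse Gram matrix. -/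
def gramInv : Matrix (Fin 8) (Fin 8) ℤ :=
  !![4, 5, 7, 10, 8, 6, 4, 2; 5, 8, 10, 15, 12, 9, 6, 3; 7, 10, 14, 20, 16, 12, 8, 4;
    10, 15, 20, 30, 24, 18, 12, 6; 8, 12, 16, 24, 20, 15, 10, 5; 6, 9, 12, 18, 15, 12, 8, 4;
    4, 6, 8, 12, 10, 8, 6, 3; 2, 3, 4, 6, 5, 4, 3, 2]

lemma gram_mul : gram * gramInv = 1 := by decide

lemma gram_symm (i j : Fin 8) : gram i j = gram j i := by
  have h : gram.transpose = gram := by decide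
  exact congrFun (congrFun h j) i

lemma al_lam (i : Fin 8) : inLambda (al i) := by
  rw [lam_iff]
  fin_cases i
  · exact ⟨![0, -1, -1, -1, -1, -1, -1, 0], 1, -1,
      fun j => by fin_cases j <;> norm_num [al], by simp [Fin.sum_univ_eight]⟩
  · exact ⟨![1, 1, 0, 0, 0, 0, 0, 0], 0, 1,
      fun j => by fin_cases j <;> norm_num [al], by simp [Fin.sum_univ_eight]⟩
  · exact ⟨![-1, 1, 0, 0, 0, 0, 0, 0], 0, 0,
      fun j => by fin_cases j <;> norm_num [al], by simp [Fin.sum_univ_eight]⟩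
  · exact ⟨![0, -1, 1, 0, 0, 0, 0, 0], 0, 0,
      fun j => by fin_cases j <;> norm_num [al], by simp [Fin.sum_univ_eight]⟩
  · exact ⟨![0, 0, -1, 1, 0, 0, 0, 0], 0, 0,
      fun j => by fin_cases j <;> norm_num [al], by simp [Fin.sum_univ_eight]⟩
  · exact ⟨![0, 0, 0, -1, 1, 0, 0, 0], 0, 0,
      fun j => by fin_cases j <;> norm_num [al], by simp [Fin.sum_univ_eight]⟩
  · exact ⟨![0, 0, 0, 0, -1, 1, 0, 0], 0, 0,
      fun j => by fin_cases j <;> norm_num [al], by simp [Fin.sum_univ_eight]⟩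
  · exact ⟨![0, 0, 0, 0, 0, -1, 1, 0], 0, 0,
      fun j => by fin_cases j <;> norm_num [al], by simp [Fin.sum_univ_eight]⟩

lemma om_eq (i : Fin 8) : om i = ∑ j, ((gramInv i j : ℤ) : ℝ) • al j := by
  funext k
  fin_cases i <;> fin_cases k <;> simp [om, al, gramInv, Fin.sum_univ_eight] <;> norm_num

lemma om_lam (i : Fin 8) : inLambda (om i) := by
  rw [om_eq]
  exact lam_sum _ _ fun j _ => lam_zsmul _ (al_lam j)

lemma expand (x : Fin 8 → ℝ) : x = ∑ i, dot x (om i) • al i := by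
  funext k
  fin_cases k <;> simp [dot, om, al, Fin.sum_univ_eight] <;> ring

lemma al_dot (i j : Fin 8) : dot (al i) (al j) = gram i j := by
  fin_cases i <;> fin_cases j <;> simp [dot, al, gram, Fin.sum_univ_eight] <;> norm_num

lemma dot_expand (x y : Fin 8 → ℝ) :
    dot x y = ∑ i, ∑ j, dot x (om i) * gram i j * dot y (om j) := by
  conv_lhs => rw [expand x, dot_sum_left]
  refine Finset.sum_congr rfl fun i _ => ?_
  rw [dot_smul_left, dot_comm (al i)]
  conv_lhs => rw [expand y, dot_sum_left, Finset.mul_sum]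
  refine Finset.sum_congr rfl fun j _ => ?_
  rw [dot_smul_left, al_dot, gram_symm j i]
  ring

lemma half_norm {ι : Type*} [DecidableEq ι] (e : ι → Fin 8 → ℝ) (he : ∀ i, isRoot (e i))
    (heo : ∀ i j, i ≠ j → dot (e i) (e j) = 0) (T : Finset ι) :
    dot ((1 / 2 : ℝ) • ∑ i ∈ T, e i) ((1 / 2 : ℝ) • ∑ i ∈ T, e i) = (T.card : ℝ) / 2 := by
  rw [dot_smul_left, dot_comm, dot_smul_left, dot_sum_left]
  have : ∀ i ∈ T, dot (e i) (∑ j ∈ T, e j) = 2 := by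
    intro i hi
    rw [dot_comm, dot_sum_left, Finset.sum_eq_single i]
    · exact (he i).2
    · intro j _ hj
      exact heo j i hj
    · intro h
      exact absurd hi h
  rw [Finset.sum_congr rfl this]
  simp
  ring

lemma five {ι : Type*} [DecidableEq ι] (e : ι → Fin 8 → ℝ) (he : ∀ i, isRoot (e i))
    (heo : ∀ i j, i ≠ j → dot (e i) (e j) = 0) (S : Finset ι) (hS : S.card = 5) :
    ∃ T ⊆ S, T.card = 4 ∧ isRoot ((1 / 2 : ℝ) • ∑ i ∈ T, e i) := by
  have hc : ∀ i j, ∃ n : ℤ, dot (e i) (om j) = n := fun i j => lam_dot (he i).1 (om_lam j)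
  choose c hc using hc
  let v : ι → Fin 8 → ZMod 2 := fun i j => (c i j : ZMod 2)
  let A : Matrix (Fin 8) (Fin 8) (ZMod 2) := gram.map (Int.castRingHom (ZMod 2))
  have hA : A * gramInv.map (Int.castRingHom (ZMod 2)) = 1 := by
    rw [← Matrix.map_mul, gram_mul]
    simp
  have hdet : IsUnit A.det := Matrix.isUnit_det_of_right_inverse hA
  have horth : ∀ i k, ∑ a, ∑ b, v i a * A a b * v k b = 0 := by
    intro i k
    have h1 : ∃ n : ℤ, dot (e i) (e k) = 2 * n := by
      by_cases h : i = k
      · subst h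
        exact ⟨1, by rw [(he i).2]; simp⟩
      · exact ⟨0, by rw [heo i k h]; simp⟩
    obtain ⟨n, hn⟩ := h1
    rw [dot_expand] at hn
    simp only [hc] at hn
    have h2 : ∑ a, ∑ b, c i a * gram a b * c k b = 2 * n := by exact_mod_cast hn
    have h3 := congrArg (Int.cast : ℤ → ZMod 2) h2
    push_cast at h3
    have h20 : (2 : ZMod 2) = 0 := rfl
    rw [h20, zero_mul] at h3
    simpa [v, A] using h3
  have hdep : ¬ LinearIndepOn (ZMod 2) v (S : Set ι) := by
    intro hli
    let C : Matrix S (Fin 8) (ZMod 2) := fun i => v i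
    have hrank : C.rank = 5 := by
      have : LinearIndependent (ZMod 2) C.row := hli
      rw [this.rank_matrix]
      simpa using hS
    have h0 : C * (A * C.transpose) = 0 := by
      ext i k
      rw [← Matrix.mul_assoc]
      simp only [Matrix.mul_apply, Matrix.transpose_apply, Matrix.zero_apply, Finset.sum_mul]
      rw [Finset.sum_comm]
      exact horth i k
    have := Matrix.rank_add_rank_le_card_of_mul_eq_zero h0
    rw [Matrix.rank_mul_eq_right_of_isUnit_det _ _ hdet, Matrix.rank_transpose, hrank] at this
    simp at this
  rw [linearIndepOn_finset_iff] at hdep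
  push Not at hdep
  obtain ⟨g, hg, i0, hi0, hgi0⟩ := hdep
  let T := S.filter (fun i => g i ≠ 0)
  have hsum : ∑ i ∈ T, v i = 0 := by
    rw [← hg, Finset.sum_filter]
    refine Finset.sum_congr rfl fun i _ => ?_
    have : g i = 0 ∨ g i = 1 := by
      generalize g i = x
      revert x; decide
    rcases this with h | h <;> simp [h]
  have hdiv : ∀ j, ∃ t : ℤ, ∑ i ∈ T, c i j = 2 * t := by
    intro j
    have h1 : ((∑ i ∈ T, c i j : ℤ) : ZMod 2) = 0 := by
      have := congrFun hsum j
      simpa [v] using this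
    exact (ZMod.intCast_zmod_eq_zero_iff_dvd _ 2).1 h1
  choose t ht using hdiv
  have hlam : inLambda ((1 / 2 : ℝ) • ∑ i ∈ T, e i) := by
    rw [expand ((1 / 2 : ℝ) • ∑ i ∈ T, e i)]
    refine lam_sum _ _ fun j _ => ?_
    have : dot ((1 / 2 : ℝ) • ∑ i ∈ T, e i) (om j) = (t j : ℝ) := by
      rw [dot_smul_left, dot_sum_left]
      simp only [hc]
      have := congrArg (Int.cast : ℤ → ℝ) (ht j)
      push_cast at this
      rw [this]; ring
    rw [this]
    exact lam_zsmul _ (al_lam j)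
  have hn := half_norm e he heo T
  obtain ⟨n, hn'⟩ := lam_even hlam
  have hcard : (T.card : ℤ) = 4 * n := by
    have : (T.card : ℝ) = 4 * n := by linarith
    exact_mod_cast this
  have hle : T.card ≤ 5 := hS ▸ Finset.card_le_card (Finset.filter_subset _ _)
  have hpos : 0 < T.card := Finset.card_pos.2 ⟨i0, Finset.mem_filter.2 ⟨hi0, hgi0⟩⟩
  have h4 : T.card = 4 := by omega
  refine ⟨T, Finset.filter_subset _ _, h4, hlam, ?_⟩
  rw [hn, h4]; norm_num

lemma half_diff {a b : Fin 8 → ℝ} (ha : isRoot a) (hb : isRoot b)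
    (h : inLambda ((1 / 2 : ℝ) • (a - b))) : a = b ∨ a = -b := by
  obtain ⟨n, hn⟩ := lam_even h
  have e1 : dot (a - b) (a - b) = 4 - 2 * dot a b := by
    rw [dot_sub_left, dot_comm a, dot_comm b, dot_sub_left, dot_sub_left, ha.2, hb.2, dot_comm b a]
    ring
  have e2 : dot (a + b) (a + b) = 4 + 2 * dot a b := by
    rw [dot_add_left, dot_comm a, dot_comm b, dot_add_left, dot_add_left, ha.2, hb.2, dot_comm b a]
    ring
  have nn : ∀ x : Fin 8 → ℝ, 0 ≤ dot x x := fun x =>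
    Finset.sum_nonneg fun i _ => mul_self_nonneg (x i)
  have p1 := nn (a - b)
  have p2 := nn (a + b)
  rw [dot_smul_left, dot_comm, dot_smul_left, e1] at hn
  have q1 : (-1 : ℝ) < n := by linarith
  have q2 : (n : ℝ) < 2 := by linarith
  have q1' : -1 < n := by exact_mod_cast q1
  have q2' : n < 2 := by exact_mod_cast q2
  have : n = 0 ∨ n = 1 := by omega
  rcases this with rfl | rfl
  · left
    refine sub_eq_zero.1 (dot_self_eq_zero ?_)
    push_cast at hn
    linarith
  · right
    refine eq_neg_of_add_eq_zero_left (dot_self_eq_zero ?_)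
    push_cast at hn
    linarith

lemma weyl_root {w : (Fin 8 → ℝ) ≃ₗ[ℝ] (Fin 8 → ℝ)} (hw : IsWeyl w) {a : Fin 8 → ℝ}
    (ha : isRoot a) : isRoot (w a) := by
  have : w a ∈ {a | isRoot a} := hw.2 ▸ Set.mem_image_of_mem w ha
  exact this

lemma weyl_trans {w w' : (Fin 8 → ℝ) ≃ₗ[ℝ] (Fin 8 → ℝ)} (hw : IsWeyl w) (hw' : IsWeyl w') :
    IsWeyl (w.trans w') := by
  refine ⟨fun a b => ?_, ?_⟩
  · simp [hw.1, hw'.1]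
  · have : (⇑(w.trans w')) = w' ∘ w := rfl
    rw [this, Set.image_comp, hw.2, hw'.2]

lemma exists_refl {a : Fin 8 → ℝ} (ha : isRoot a) :
    ∃ s : (Fin 8 → ℝ) ≃ₗ[ℝ] (Fin 8 → ℝ), IsWeyl s ∧ ∀ x, s x = x - dot x a • a := by
  have h2 : dotL a a = 2 := ha.2
  have hs : ∀ x, Module.reflection h2 x = x - dot x a • a := fun x =>
    Module.reflection_apply x h2
  have hd : ∀ x y, dot (Module.reflection h2 x) (Module.reflection h2 y) = dot x y := by
    intro x y
    rw [hs, hs, dot_sub_left, dot_smul_left, dot_comm x, dot_comm a, dot_sub_left, dot_sub_left,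
      dot_smul_left, dot_smul_left, ha.2, dot_comm a x, dot_comm y x]
    ring
  have hr : ∀ x, isRoot x → isRoot (Module.reflection h2 x) := by
    intro x hx
    refine ⟨?_, by rw [hd, hx.2]⟩
    rw [hs]
    obtain ⟨n, hn⟩ := lam_dot hx.1 ha.1
    rw [hn]
    exact lam_sub hx.1 (lam_zsmul n ha.1)
  refine ⟨Module.reflection h2, ⟨hd, ?_⟩, hs⟩
  ext x
  constructor
  · rintro ⟨y, hy, rfl⟩
    exact hr y hy
  · intro hx
    exact ⟨_, hr x hx, Module.involutive_reflection h2 x⟩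

lemma fix_signs {ι : Type*} [DecidableEq ι] (e f : ι → Fin 8 → ℝ) (hf : ∀ i, isRoot (f i))
    (hfo : ∀ i j, i ≠ j → dot (f i) (f j) = 0)
    {w : (Fin 8 → ℝ) ≃ₗ[ℝ] (Fin 8 → ℝ)} (hw : IsWeyl w)
    (h : ∀ i, w (e i) = f i ∨ w (e i) = -f i) (U : Finset ι) :
    ∃ w : (Fin 8 → ℝ) ≃ₗ[ℝ] (Fin 8 → ℝ), IsWeyl w ∧
      ∀ i, w (e i) = f i ∨ (i ∉ U ∧ w (e i) = -f i) := by
  induction U using Finset.induction_on with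
  | empty => exact ⟨w, hw, by simpa using h⟩
  | insert a U haU ih =>
    obtain ⟨w, hw, h⟩ := ih
    rcases h a with ha | ⟨-, ha⟩
    · refine ⟨w, hw, fun i => ?_⟩
      by_cases hi : i = a
      · subst hi; exact Or.inl ha
      · simpa [hi] using h i
    · obtain ⟨s, hs, hs'⟩ := exists_refl (hf a)
      refine ⟨w.trans s, weyl_trans hw hs, fun i => ?_⟩
      by_cases hi : i = a
      · subst hi
        left
        rw [LinearEquiv.trans_apply, ha, map_neg, hs', (hf i).2]
        module
      · have hfix : s (f i) = f i := by rw [hs', hfo i a hi]; simp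
        rcases h i with h' | ⟨h1, h'⟩
        · left; rw [LinearEquiv.trans_apply, h', hfix]
        · right; exact ⟨by simp [hi, h1], by rw [LinearEquiv.trans_apply, h', map_neg, hfix]⟩

lemma quad {ι : Type*} [DecidableEq ι] (e : ι → Fin 8 → ℝ) (he : ∀ i, isRoot (e i))
    (heo : ∀ i j, i ≠ j → dot (e i) (e j) = 0) (S : Finset ι) (hS : S.card = 5) :
    ∃ Q ⊆ S, Q.card = 4 ∧ ¬ isRoot ((1 / 2 : ℝ) • ∑ i ∈ Q, e i) := by
  by_contra! hcon
  obtain ⟨a, ha, b, hb, hab⟩ := Finset.one_lt_card.1 (show 1 < S.card by omega)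
  have h1 := hcon (S.erase a) (Finset.erase_subset _ _) (by rw [Finset.card_erase_of_mem ha, hS])
  have h2 := hcon (S.erase b) (Finset.erase_subset _ _) (by rw [Finset.card_erase_of_mem hb, hS])
  have h3 := lam_sub h1.1 h2.1
  have h4 : (1 / 2 : ℝ) • ∑ i ∈ S.erase a, e i - (1 / 2 : ℝ) • ∑ i ∈ S.erase b, e i
      = (1 / 2 : ℝ) • (e b - e a) := by
    rw [← smul_sub]
    congr 1
    have p1 := Finset.add_sum_erase S e ha
    have p2 := Finset.add_sum_erase S e hb
    rw [← p2] at p1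
    linear_combination (exp := 1) p1
  rw [h4] at h3
  have hz := heo b a (Ne.symm hab)
  rcases half_diff (he b) (he a) h3 with h | h
  · rw [h, (he a).2] at hz; norm_num at hz
  · rw [h, dot_neg_left, (he a).2] at hz; norm_num at hz

lemma key {ι : Type*} [DecidableEq ι] (e f : ι → Fin 8 → ℝ)
    (he : ∀ i, isRoot (e i)) (hf : ∀ i, isRoot (f i))
    (heo : ∀ i j, i ≠ j → dot (e i) (e j) = 0)
    (H : ∀ S : Finset ι, S.card = 4 → ∃ w : (Fin 8 → ℝ) ≃ₗ[ℝ] (Fin 8 → ℝ), IsWeyl w ∧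
      ∀ i ∈ S, w (e i) = f i)
    (Q : Finset ι) (hQ : Q.card = 4) (hQr : ¬ isRoot ((1 / 2 : ℝ) • ∑ i ∈ Q, e i))
    {w : (Fin 8 → ℝ) ≃ₗ[ℝ] (Fin 8 → ℝ)} (hw : IsWeyl w) (hwQ : ∀ i ∈ Q, w (e i) = f i)
    (m : ι) : w (e m) = f m ∨ w (e m) = -f m := by
  by_cases hm : m ∈ Q
  · exact Or.inl (hwQ m hm)
  obtain ⟨T, hTS, hT, hTr⟩ := five e he heo (insert m Q)
    (by rw [Finset.card_insert_of_notMem hm, hQ])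
  have hmT : m ∈ T := by
    by_contra hmT
    have : T ⊆ Q := fun i hi => by
      rcases Finset.mem_insert.1 (hTS hi) with h | h
      · subst h; exact absurd hi hmT
      · exact h
    rw [Finset.eq_of_subset_of_card_le this (by omega)] at hTr
    exact hQr hTr
  obtain ⟨w', hw', hwT⟩ := H T hT
  have h1 := weyl_root hw hTr
  have h2 := weyl_root hw' hTr
  rw [map_smul, map_sum, Finset.sum_congr rfl hwT] at h2
  rw [map_smul, map_sum] at h1
  have h3 : ∑ i ∈ T.erase m, w (e i) = ∑ i ∈ T.erase m, f i := by
    refine Finset.sum_congr rfl fun i hi => hwQ i ?_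
    obtain ⟨hi1, hi2⟩ := Finset.mem_erase.1 hi
    exact (Finset.mem_insert.1 (hTS hi2)).resolve_left hi1
  rw [← Finset.add_sum_erase T _ hmT] at h1 h2
  rw [h3] at h1
  refine half_diff (weyl_root hw (he m)) (hf m) ?_
  have h4 := lam_sub h1.1 h2.1
  rw [← smul_sub, add_sub_add_right_eq_sub] at h4
  exact h4

end E8

/-- For `5 ≤ r ≤ 8` and `r`-tuples `(e₁,…,e_r)`, `(f₁,…,f_r)` of
pairwise orthogonal roots, there is `w ∈ W` with `w(eᵢ) = fᵢ` for all `i` if and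
only if for all `i < j < k < l` there is `w' ∈ W` sending `eᵢ, eⱼ, e_k, e_l` to
`fᵢ, fⱼ, f_k, f_l` respectively. -/
theorem stmt_12 (r : ℕ) (hr5 : 5 ≤ r) (hr8 : r ≤ 8)
    (e f : Fin r → (Fin 8 → ℝ))
    (he : ∀ i, isRoot (e i)) (hf : ∀ i, isRoot (f i))
    (heo : ∀ i j, i ≠ j → dot (e i) (e j) = 0)
    (hfo : ∀ i j, i ≠ j → dot (f i) (f j) = 0) :
    (∃ w : (Fin 8 → ℝ) ≃ₗ[ℝ] (Fin 8 → ℝ), IsWeyl w ∧ ∀ i, w (e i) = f i) ↔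
    (∀ i j k l : Fin r, i < j → j < k → k < l →
      ∃ w : (Fin 8 → ℝ) ≃ₗ[ℝ] (Fin 8 → ℝ), IsWeyl w ∧
        w (e i) = f i ∧ w (e j) = f j ∧ w (e k) = f k ∧ w (e l) = f l) := by
  classical
  constructor
  · rintro ⟨w, hw, h⟩ i j k l _ _ _
    exact ⟨w, hw, h i, h j, h k, h l⟩
  · intro H
    have H' : ∀ S : Finset (Fin r), S.card = 4 →
        ∃ w : (Fin 8 → ℝ) ≃ₗ[ℝ] (Fin 8 → ℝ), IsWeyl w ∧ ∀ i ∈ S, w (e i) = f i := by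
      intro S hS
      let o := S.orderEmbOfFin hS
      obtain ⟨w, hw, h0, h1, h2, h3⟩ := H (o 0) (o 1) (o 2) (o 3)
        (o.strictMono (by decide)) (o.strictMono (by decide)) (o.strictMono (by decide))
      refine ⟨w, hw, fun i hi => ?_⟩
      have : i ∈ Set.range o := by rw [Finset.range_orderEmbOfFin]; exact hi
      obtain ⟨x, rfl⟩ := this
      fin_cases x <;> assumption
    obtain ⟨S, -, hS⟩ := Finset.exists_subset_card_eq
      (show 5 ≤ (Finset.univ : Finset (Fin r)).card by simpa using hr5)
    obtain ⟨Q, -, hQ, hQr⟩ := E8.quad e he heo S hS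
    obtain ⟨w, hw, hwQ⟩ := H' Q hQ
    obtain ⟨w', hw', h'⟩ := E8.fix_signs e f hf hfo hw
      (E8.key e f he hf heo H' Q hQ hQr hw hwQ) Finset.univ
    exact ⟨w', hw', fun i => by simpa using h' i⟩
end
end

section
/- (i) There are exactly 15120 two-element sets of pairwise orthogonal roots, and the Weyl group W acts transitively on them. (ii) There are exactly 302400 three-element sets of pairwise orthogonal roots, and W acts transitively on them. (iii) There are exactly 1965600 four-element sets of pairwise orthogonal roots, and they form exactly two W-orbits: one of size 151200, consisting of those sets whose elements sum to a vector in 2Λ, and one of size 1814400, consisting of those sets whose elements sum to a vector not in 2Λ. -/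
noncomputable section

/-- A `k`-element set of pairwise orthogonal roots. -/
def OrthSet (k : ℕ) (K : Finset (Fin 8 → ℝ)) : Prop :=
  K.card = k ∧ (∀ e ∈ K, isRoot e) ∧ ∀ e ∈ K, ∀ f ∈ K, e ≠ f → dot e f = 0

/-- The elements of `K` sum to a vector in `2Λ`. -/
def SumInTwoLambda (K : Finset (Fin 8 → ℝ)) : Prop :=
  ∃ x, inLambda x ∧ (∑ e ∈ K, e) = (2 : ℝ) • x

def ldot : List ℤ → List ℤ → ℤ
  | a :: l, b :: m => a * b + ldot l m
  | _, _ => 0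

def lsum : List ℤ → ℤ
  | a :: l => a + lsum l
  | [] => 0

def genI : ℕ → ℕ → List (List ℤ)
  | 0, 0 => [[]]
  | 0, _ + 1 => []
  | n + 1, 0 => (genI n 0).map (0 :: ·)
  | n + 1, s + 1 => (genI n (s + 1)).map (0 :: ·) ++
      ((genI n s).map (2 :: ·) ++ (genI n s).map (-2 :: ·))

def genH : ℕ → List (List ℤ)
  | 0 => [[]]
  | n + 1 => (genH n).map (1 :: ·) ++ (genH n).map (-1 :: ·)

def rootL : List (List ℤ) := genI 8 2 ++ (genH 8).filter (fun l => lsum l % 4 == 0)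

def orthL (P : List (List ℤ)) : List (List ℤ) :=
  rootL.filter (fun h => P.all (fun p => ldot p h == 0))

def chk (P : List (List ℤ)) (t : List ℤ) : Bool :=
  (orthL P).all fun h => ldot h t != 0 ||
    (orthL P).any fun c => ldot h c != 0 && ldot c t != 0

def okL (l : List ℤ) : Bool :=
  l.length == 8 && ldot l l == 8 && lsum l % 4 == 0 &&
    (l.all (fun x => x % 2 == 0) || l.all (fun x => x % 2 == 1))

def v1 : List ℤ := [2, 2, 0, 0, 0, 0, 0, 0]
def v2 : List ℤ := [2, -2, 0, 0, 0, 0, 0, 0]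
def v3 : List ℤ := [0, 0, 2, 2, 0, 0, 0, 0]
def v4 : List ℤ := [0, 0, 2, -2, 0, 0, 0, 0]
def v5 : List ℤ := [0, 0, 0, 0, 2, 2, 0, 0]

theorem okL_all : rootL.all okL = true := by decide +kernel
theorem nodup_rootL : rootL.Nodup := by decide +kernel
theorem chk0 : chk [] v1 = true := by decide +kernel
theorem chk1 : chk [v1] v2 = true := by decide +kernel
theorem chk2 : chk [v2, v1] v3 = true := by decide +kernel
theorem chk3 : chk [v4, v3, v2, v1] v5 = true := by decide +kernel
theorem cnt0 : (orthL []).length = 240 := by decide +kernel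
theorem cnt1 : (orthL [v1]).length = 126 := by decide +kernel
theorem cnt2 : (orthL [v2, v1]).length = 60 := by decide +kernel
theorem cnt3 : (orthL [v3, v2, v1]).length = 26 := by decide +kernel
theorem cnt4 : ((orthL [v3, v2, v1]).filter (fun h => ldot v4 h != 0)).length = 2 := by
  decide +kernel
theorem mem1 : v1 ∈ orthL [] := by decide +kernel
theorem mem2 : v2 ∈ orthL [v1] := by decide +kernel
theorem mem3 : v3 ∈ orthL [v2, v1] := by decide +kernel
theorem mem4 : v4 ∈ orthL [v3, v2, v1] := by decide +kernel
theorem mem5 : v5 ∈ orthL [v4, v3, v2, v1] := by decide +kernel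

def toR (l : List ℤ) : Fin 8 → ℝ := fun i => (l.getD i 0 : ℝ) / 2

theorem len8 {l : List ℤ} (h : l.length = 8) : ∃ a b c d e f g i, l = [a, b, c, d, e, f, g, i] := by
  match l, h with
  | [a, b, c, d, e, f, g, i], _ => exact ⟨a, b, c, d, e, f, g, i, rfl⟩

theorem dot_toR {l m : List ℤ} (h : l.length = 8) (h' : m.length = 8) :
    dot (toR l) (toR m) = (ldot l m : ℝ) / 4 := by
  obtain ⟨a, b, c, d, e, f, g, i, rfl⟩ := len8 h
  obtain ⟨a', b', c', d', e', f', g', i', rfl⟩ := len8 h'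
  simp [dot, toR, ldot, Fin.sum_univ_succ]
  ring

theorem toR_inj {l m : List ℤ} (h : l.length = 8) (h' : m.length = 8) (e : toR l = toR m) :
    l = m := by
  apply List.ext_getElem (by omega)
  intro i h1 h2
  have := congrFun e ⟨i, by omega⟩
  simp only [toR, List.getD_eq_getElem _ _ h1, List.getD_eq_getElem _ _ h2] at this
  have h3 : ((l[i] : ℤ) : ℝ) = (m[i] : ℤ) := by linarith
  exact_mod_cast h3

theorem mem_genI (n s : ℕ) (l : List ℤ) (h1 : l.length = n) (h2 : ∀ x ∈ l, x = 0 ∨ x = 2 ∨ x = -2)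
    (h3 : ldot l l = 4 * s) : l ∈ genI n s := by
  induction l generalizing n s with
  | nil =>
    subst h1
    have : s = 0 := by simp [ldot] at h3; omega
    subst this
    simp [genI]
  | cons a l ih =>
    subst h1
    have hn : 0 ≤ ldot l l := by
      clear ih h2 h3
      induction l with
      | nil => simp [ldot]
      | cons b l ih => simp only [ldot]; nlinarith [mul_self_nonneg b]
    have h2' : ∀ x ∈ l, x = 0 ∨ x = 2 ∨ x = -2 := fun x hx => h2 x (by simp [hx])
    simp only [ldot] at h3
    rcases h2 a (by simp) with rfl | rfl | rfl
    · have := ih l.length s rfl h2' (by linarith)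
      cases s <;> simp [genI, this]
    · obtain _ | s := s
      · push_cast at h3; omega
      · have := ih l.length s rfl h2' (by push_cast at h3; linarith)
        simp [genI, this]
    · obtain _ | s := s
      · push_cast at h3; omega
      · have := ih l.length s rfl h2' (by push_cast at h3; linarith)
        simp [genI, this]

theorem mem_genH (n : ℕ) (l : List ℤ) (h1 : l.length = n) (h2 : ∀ x ∈ l, x = 1 ∨ x = -1) :
    l ∈ genH n := by
  induction l generalizing n with
  | nil => subst h1; simp [genH]
  | cons a l ih =>
    subst h1
    have := ih l.length rfl (fun x hx => h2 x (by simp [hx]))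
    rcases h2 a (by simp) with rfl | rfl <;> simp [genH, this]

theorem okL_of {l : List ℤ} (h : l ∈ rootL) : l.length = 8 ∧ ldot l l = 8 ∧ lsum l % 4 = 0 ∧
    ((∀ x ∈ l, x % 2 = 0) ∨ (∀ x ∈ l, x % 2 = 1)) := by
  have := List.all_eq_true.1 okL_all l h
  simpa [okL, and_assoc] using this

theorem toR_ofFn (v : Fin 8 → ℤ) : toR (List.ofFn v) = fun i => (v i : ℝ) / 2 := by
  funext i
  fin_cases i <;> simp [toR]

theorem isRoot_toR {l : List ℤ} (h : l ∈ rootL) : isRoot (toR l) := by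
  obtain ⟨h1, h2, h3, h4⟩ := okL_of h
  refine ⟨⟨?_, ?_⟩, ?_⟩
  · have key : ∀ i : Fin 8, l.getD i 0 ∈ l := by
      intro i
      rw [List.getD_eq_getElem _ _ (by omega)]
      exact List.getElem_mem _
    rcases h4 with h4 | h4
    · left
      intro i
      refine ⟨l.getD i 0 / 2, ?_⟩
      have := h4 _ (key i)
      have h5 : l.getD i 0 = 2 * (l.getD i 0 / 2) := by omega
      simp only [toR]
      have h6 : (l.getD i 0 : ℝ) = 2 * ((l.getD i 0 / 2 : ℤ) : ℝ) := by exact_mod_cast h5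
      linarith
    · right
      intro i
      refine ⟨l.getD i 0 / 2, ?_⟩
      have := h4 _ (key i)
      have h5 : l.getD i 0 = 2 * (l.getD i 0 / 2) + 1 := by omega
      simp only [toR]
      have h6 : (l.getD i 0 : ℝ) = 2 * ((l.getD i 0 / 2 : ℤ) : ℝ) + 1 := by exact_mod_cast h5
      linarith
  · refine ⟨lsum l / 4, ?_⟩
    have h5 : lsum l = 4 * (lsum l / 4) := by omega
    have h6 : (lsum l : ℝ) = 4 * ((lsum l / 4 : ℤ) : ℝ) := by exact_mod_cast h5
    have h7 : ∑ i, toR l i = (lsum l : ℝ) / 2 := by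
      obtain ⟨a, b, c, d, e, f, g, i, rfl⟩ := len8 h1
      simp [toR, lsum, Fin.sum_univ_succ]
      ring
    rw [h7]; linarith
  · rw [dot_toR h1 h1, h2]; norm_num

theorem ldot_ofFn (v : Fin 8 → ℤ) : ldot (List.ofFn v) (List.ofFn v) = ∑ i, v i * v i := by
  simp [ldot, Fin.sum_univ_succ]

theorem lsum_ofFn (v : Fin 8 → ℤ) : lsum (List.ofFn v) = ∑ i, v i := by
  simp [lsum, Fin.sum_univ_succ]

theorem exists_of_isRoot {a : Fin 8 → ℝ} (h : isRoot a) : ∃ l ∈ rootL, toR l = a := by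
  obtain ⟨⟨h1 | h1, m, h2⟩, h3⟩ := h
  · choose n hn using h1
    have hs : ∑ i, n i * n i = 2 := by
      have : (∑ i, (n i : ℝ) * n i) = 2 := by simpa [dot, hn] using h3
      exact_mod_cast this
    have hle : ∀ i, n i * n i ≤ 2 := fun i => by
      rw [← hs]
      exact Finset.single_le_sum (f := fun i => n i * n i) (fun j _ => mul_self_nonneg _) (Finset.mem_univ i)
    refine ⟨List.ofFn (fun i => 2 * n i), ?_, ?_⟩
    · apply List.mem_append_left
      apply mem_genI
      · simp
      · intro x hx
        obtain ⟨i, rfl⟩ := (List.mem_ofFn' _ _).1 hx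
        have := hle i
        have h5 : n i ≤ 1 := by nlinarith
        have h6 : -1 ≤ n i := by nlinarith
        simp only
        omega
      · rw [ldot_ofFn]
        have : ∀ i, 2 * n i * (2 * n i) = 4 * (n i * n i) := fun i => by ring
        simp only [this, ← Finset.mul_sum, hs]
        norm_num
    · rw [toR_ofFn]; funext i; rw [hn]; push_cast; ring
  · choose n hn using h1
    have hs : ∑ i, (2 * n i + 1) * (2 * n i + 1) = 8 := by
      have : (∑ i, ((n i : ℝ) + 1 / 2) * (n i + 1 / 2)) = 2 := by simpa only [dot, hn] using h3
      have h4 : (∑ i, (2 * (n i : ℝ) + 1) * (2 * n i + 1)) = 8 := by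
        have : ∀ i, (2 * (n i : ℝ) + 1) * (2 * n i + 1) = 4 * (((n i : ℝ) + 1 / 2) * (n i + 1 / 2)) :=
          fun i => by ring
        simp only [← Finset.mul_sum, *]
        norm_num
      exact_mod_cast h4
    have hz : ∀ i, n i * (n i + 1) = 0 := by
      have hnn : ∀ i ∈ (Finset.univ : Finset (Fin 8)), 0 ≤ n i * (n i + 1) := fun i _ => by
        rcases le_or_gt 0 (n i) with h | h <;> nlinarith
      have : ∑ i, n i * (n i + 1) = 0 := by
        have e : ∀ i, (2 * n i + 1) * (2 * n i + 1) = 4 * (n i * (n i + 1)) + 1 := fun i => by ring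
        simp only [e, Finset.sum_add_distrib, ← Finset.mul_sum] at hs
        simp at hs
        omega
      intro i
      exact (Finset.sum_eq_zero_iff_of_nonneg hnn).1 this i (Finset.mem_univ i)
    have hsum : ∑ i, (2 * n i + 1) = 4 * m := by
      have : ∑ i, (2 * (n i : ℝ) + 1) = 4 * m := by
        have e : ∀ i, (2 * (n i : ℝ) + 1) = 2 * a i := fun i => by rw [hn]; ring
        simp only [e, ← Finset.mul_sum, h2]
        ring
      exact_mod_cast this
    refine ⟨List.ofFn (fun i => 2 * n i + 1), ?_, ?_⟩
    · apply List.mem_append_right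
      rw [List.mem_filter]
      constructor
      · apply mem_genH
        · simp
        · intro x hx
          obtain ⟨i, rfl⟩ := (List.mem_ofFn' _ _).1 hx
          rcases mul_eq_zero.1 (hz i) with h | h <;> simp only <;> omega
      · rw [lsum_ofFn, hsum]; simp
    · rw [toR_ofFn]; funext i; rw [hn]; push_cast; ring

theorem dot_comm (a b : Fin 8 → ℝ) : dot a b = dot b a := by
  simp [dot, mul_comm]
theorem dot_add_left (a b c : Fin 8 → ℝ) : dot (a + b) c = dot a c + dot b c := by
  simp [dot, add_mul, Finset.sum_add_distrib]
theorem dot_smul_left (t : ℝ) (a c : Fin 8 → ℝ) : dot (t • a) c = t * dot a c := by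
  simp [dot, Finset.mul_sum, mul_assoc]
theorem dot_sub_left (a b c : Fin 8 → ℝ) : dot (a - b) c = dot a c - dot b c := by
  simp [dot, sub_mul, Finset.sum_sub_distrib]
theorem dot_sub_right (a b c : Fin 8 → ℝ) : dot c (a - b) = dot c a - dot c b := by
  rw [dot_comm, dot_sub_left, dot_comm a, dot_comm b]
theorem dot_smul_right (t : ℝ) (a c : Fin 8 → ℝ) : dot c (t • a) = t * dot c a := by
  rw [dot_comm, dot_smul_left, dot_comm a]
theorem dot_self_nonneg (a : Fin 8 → ℝ) : 0 ≤ dot a a :=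
  Finset.sum_nonneg fun _ _ => mul_self_nonneg _
theorem eq_zero_of_dot {a : Fin 8 → ℝ} (h : dot a a = 0) : a = 0 := by
  funext i
  have := (Finset.sum_eq_zero_iff_of_nonneg (fun i _ => mul_self_nonneg (a i))).1 h i (Finset.mem_univ i)
  simpa using this

theorem dot_int {x y : Fin 8 → ℝ} (hx : inLambda x) (hy : inLambda y) : ∃ n : ℤ, dot x y = n := by
  have mixed : ∀ {x y : Fin 8 → ℝ}, (∀ i, ∃ n : ℤ, x i = n) → (∃ n : ℤ, (∑ i, x i) = 2 * n) →
      (∀ i, ∃ n : ℤ, y i = n + 1 / 2) → ∃ n : ℤ, dot x y = n := by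
    intro x y h1 ⟨m, hm⟩ h2
    choose a ha using h1
    choose b hb using h2
    refine ⟨∑ i, a i * b i + m, ?_⟩
    have e : dot x y = ∑ i, (a i : ℝ) * b i + (∑ i, x i) / 2 := by
      rw [dot, Finset.sum_div, ← Finset.sum_add_distrib]
      exact Finset.sum_congr rfl fun i _ => by rw [ha, hb]; ring
    rw [e, hm]; push_cast; ring
  obtain ⟨h1 | h1, hs⟩ := hx
  · obtain ⟨h2 | h2, hs2⟩ := hy
    · choose a ha using h1
      choose b hb using h2
      exact ⟨∑ i, a i * b i, by simp [dot, ha, hb]⟩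
    · exact mixed h1 hs h2
  · obtain ⟨h2 | h2, hs2⟩ := hy
    · rw [dot_comm]; exact mixed h2 hs2 h1
    · choose a ha using h1
      choose b hb using h2
      obtain ⟨m, hm⟩ := hs
      obtain ⟨k, hk⟩ := hs2
      refine ⟨∑ i, a i * b i + m + k - 2, ?_⟩
      have e : dot x y = ∑ i, ((a i : ℝ) * b i + x i / 2 + y i / 2 - 1 / 4) :=
        Finset.sum_congr rfl fun i _ => by rw [ha, hb]; ring
      rw [e, Finset.sum_sub_distrib, Finset.sum_add_distrib, Finset.sum_add_distrib,
        ← Finset.sum_div, ← Finset.sum_div, hm, hk]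
      simp
      ring

theorem inLambda_of_dual {x : Fin 8 → ℝ} (h : ∀ r, isRoot r → ∃ n : ℤ, dot x r = n) :
    inLambda x := by
  have g : ∀ l : List ℤ, l ∈ rootL → ∃ n : ℤ, dot x (toR l) = n := fun l hl => h _ (isRoot_toR hl)
  obtain ⟨n1, h1⟩ := g [2, 2, 0, 0, 0, 0, 0, 0] (by decide +kernel)
  obtain ⟨n2, h2⟩ := g [2, -2, 0, 0, 0, 0, 0, 0] (by decide +kernel)
  obtain ⟨n3, h3⟩ := g [2, 0, -2, 0, 0, 0, 0, 0] (by decide +kernel)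
  obtain ⟨n4, h4⟩ := g [2, 0, 0, -2, 0, 0, 0, 0] (by decide +kernel)
  obtain ⟨n5, h5⟩ := g [2, 0, 0, 0, -2, 0, 0, 0] (by decide +kernel)
  obtain ⟨n6, h6⟩ := g [2, 0, 0, 0, 0, -2, 0, 0] (by decide +kernel)
  obtain ⟨n7, h7⟩ := g [2, 0, 0, 0, 0, 0, -2, 0] (by decide +kernel)
  obtain ⟨n8, h8⟩ := g [2, 0, 0, 0, 0, 0, 0, -2] (by decide +kernel)
  obtain ⟨n9, h9⟩ := g [1, 1, 1, 1, 1, 1, 1, 1] (by decide +kernel)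
  simp [dot, toR, Fin.sum_univ_succ] at h1 h2 h3 h4 h5 h6 h7 h8 h9
  simp only [inLambda, Fin.forall_fin_succ, Fin.sum_univ_succ]
  simp
  have h0 : 2 * x 0 = ((n1 + n2 : ℤ) : ℝ) := by push_cast; linarith
  refine ⟨?_, n9, by linarith⟩
  rcases Int.even_or_odd' (n1 + n2) with ⟨k, hk | hk⟩
  · left
    rw [hk] at h0
    push_cast at h0
    exact ⟨⟨k, by linarith⟩, ⟨k - n2, by push_cast; linarith⟩, ⟨k - n3, by push_cast; linarith⟩,
      ⟨k - n4, by push_cast; linarith⟩, ⟨k - n5, by push_cast; linarith⟩,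
      ⟨k - n6, by push_cast; linarith⟩, ⟨k - n7, by push_cast; linarith⟩,
      ⟨k - n8, by push_cast; linarith⟩⟩
  · right
    rw [hk] at h0
    push_cast at h0
    exact ⟨⟨k, by linarith⟩, ⟨k - n2, by push_cast; linarith⟩, ⟨k - n3, by push_cast; linarith⟩,
      ⟨k - n4, by push_cast; linarith⟩, ⟨k - n5, by push_cast; linarith⟩,
      ⟨k - n6, by push_cast; linarith⟩, ⟨k - n7, by push_cast; linarith⟩,
      ⟨k - n8, by push_cast; linarith⟩⟩

theorem inLambda_iff_s13 {x : Fin 8 → ℝ} : inLambda x ↔ ∀ r, isRoot r → ∃ n : ℤ, dot x r = n :=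
  ⟨fun h _ hr => dot_int h hr.1, inLambda_of_dual⟩

theorem inLambda_sub_zsmul {x r : Fin 8 → ℝ} (hx : inLambda x) (hr : inLambda r) (n : ℤ) :
    inLambda (x - (n : ℝ) • r) := by
  rw [inLambda_iff_s13]
  intro s hs
  obtain ⟨a, ha⟩ := dot_int hx hs.1
  obtain ⟨b, hb⟩ := dot_int hr hs.1
  exact ⟨a - n * b, by rw [dot_sub_left, dot_smul_left, ha, hb]; push_cast; ring⟩

def reflMap (r : Fin 8 → ℝ) : (Fin 8 → ℝ) →ₗ[ℝ] (Fin 8 → ℝ) where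
  toFun x := x - dot x r • r
  map_add' x y := by rw [dot_add_left, add_smul]; abel
  map_smul' t x := by rw [dot_smul_left, mul_smul, smul_sub]; rfl

theorem reflMap_apply (r x : Fin 8 → ℝ) : reflMap r x = x - dot x r • r := rfl

theorem reflMap_invol {r : Fin 8 → ℝ} (h : isRoot r) : Function.Involutive (reflMap r) := by
  intro x
  simp only [reflMap_apply, dot_sub_left, dot_smul_left, h.2]
  module

theorem reflMap_dot {r : Fin 8 → ℝ} (h : isRoot r) (a b : Fin 8 → ℝ) :
    dot (reflMap r a) (reflMap r b) = dot a b := by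
  simp only [reflMap_apply, dot_sub_left, dot_smul_left, dot_sub_right, dot_smul_right, h.2,
    dot_comm r]
  ring

theorem reflMap_root {r : Fin 8 → ℝ} (h : isRoot r) {a : Fin 8 → ℝ} (ha : isRoot a) :
    isRoot (reflMap r a) := by
  refine ⟨?_, by rw [reflMap_dot h, ha.2]⟩
  obtain ⟨n, hn⟩ := dot_int ha.1 h.1
  rw [reflMap_apply, hn]
  exact inLambda_sub_zsmul ha.1 h.1 n

def reflE {r : Fin 8 → ℝ} (h : isRoot r) : (Fin 8 → ℝ) ≃ₗ[ℝ] (Fin 8 → ℝ) :=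
  LinearEquiv.ofInvolutive (reflMap r) (reflMap_invol h)

theorem reflE_apply {r : Fin 8 → ℝ} (h : isRoot r) (x : Fin 8 → ℝ) :
    reflE h x = x - dot x r • r := rfl

theorem reflE_weyl {r : Fin 8 → ℝ} (h : isRoot r) : IsWeyl (reflE h) := by
  refine ⟨fun a b => reflMap_dot h a b, Set.Subset.antisymm ?_ ?_⟩
  · rintro _ ⟨a, ha, rfl⟩
    exact reflMap_root h ha
  · intro a ha
    exact ⟨reflMap r a, reflMap_root h ha, reflMap_invol h a⟩

theorem weyl_refl : IsWeyl (LinearEquiv.refl ℝ (Fin 8 → ℝ)) := ⟨fun _ _ => rfl, Set.image_id _⟩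

theorem IsWeyl.trans {w v : (Fin 8 → ℝ) ≃ₗ[ℝ] (Fin 8 → ℝ)} (hw : IsWeyl w) (hv : IsWeyl v) :
    IsWeyl (w.trans v) := by
  refine ⟨fun a b => by simp [hv.1, hw.1], ?_⟩
  rw [show ⇑(w.trans v) = ⇑v ∘ ⇑w from rfl, Set.image_comp, hw.2, hv.2]

theorem IsWeyl.symm {w : (Fin 8 → ℝ) ≃ₗ[ℝ] (Fin 8 → ℝ)} (hw : IsWeyl w) : IsWeyl w.symm := by
  refine ⟨fun a b => by rw [← hw.1]; simp, ?_⟩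
  conv_lhs => rw [← hw.2]
  rw [← Set.image_comp]
  simp

theorem IsWeyl.root {w : (Fin 8 → ℝ) ≃ₗ[ℝ] (Fin 8 → ℝ)} (hw : IsWeyl w) {a : Fin 8 → ℝ}
    (ha : isRoot a) : isRoot (w a) := by
  have : w a ∈ {a | isRoot a} := hw.2 ▸ Set.mem_image_of_mem w ha
  exact this

theorem IsWeyl.root_iff {w : (Fin 8 → ℝ) ≃ₗ[ℝ] (Fin 8 → ℝ)} (hw : IsWeyl w) {a : Fin 8 → ℝ} :
    isRoot (w a) ↔ isRoot a :=
  ⟨fun h => by simpa using hw.symm.root h, hw.root⟩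

theorem IsWeyl.lam {w : (Fin 8 → ℝ) ≃ₗ[ℝ] (Fin 8 → ℝ)} (hw : IsWeyl w) {x : Fin 8 → ℝ}
    (hx : inLambda x) : inLambda (w x) := by
  rw [inLambda_iff_s13] at hx ⊢
  intro r hr
  obtain ⟨n, hn⟩ := hx _ (hw.symm.root hr)
  refine ⟨n, ?_⟩
  rw [← hn, ← hw.1 x]
  simp

def WE (A B : Finset (Fin 8 → ℝ)) : Prop :=
  ∃ w : (Fin 8 → ℝ) ≃ₗ[ℝ] (Fin 8 → ℝ), IsWeyl w ∧
    ⇑w '' (A : Set (Fin 8 → ℝ)) = (B : Set (Fin 8 → ℝ))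

theorem WE.symm {A B : Finset (Fin 8 → ℝ)} (h : WE A B) : WE B A := by
  obtain ⟨w, hw, e⟩ := h
  refine ⟨w.symm, hw.symm, ?_⟩
  rw [← e, ← Set.image_comp]
  simp

theorem WE.trans {A B C : Finset (Fin 8 → ℝ)} (h : WE A B) (h' : WE B C) : WE A C := by
  obtain ⟨w, hw, e⟩ := h
  obtain ⟨v, hv, e'⟩ := h'
  refine ⟨w.trans v, hw.trans hv, ?_⟩
  rw [show ⇑(w.trans v) = ⇑v ∘ ⇑w from rfl, Set.image_comp, e, e']

theorem img_eq {w : (Fin 8 → ℝ) ≃ₗ[ℝ] (Fin 8 → ℝ)} {A B : Finset (Fin 8 → ℝ)}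
    (e : ⇑w '' (A : Set (Fin 8 → ℝ)) = (B : Set (Fin 8 → ℝ))) :
    B = A.map w.toEquiv.toEmbedding := by
  apply Finset.coe_injective
  rw [Finset.coe_map, ← e]; rfl

theorem WE.sum {A B : Finset (Fin 8 → ℝ)} (h : WE A B) (hs : SumInTwoLambda A) :
    SumInTwoLambda B := by
  obtain ⟨w, hw, e⟩ := h
  obtain ⟨x, hx, hs⟩ := hs
  refine ⟨w x, hw.lam hx, ?_⟩
  rw [img_eq e, Finset.sum_map, ← map_smul, ← hs, map_sum]
  rfl

theorem WE.sum_iff {A B : Finset (Fin 8 → ℝ)} (h : WE A B) :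
    SumInTwoLambda A ↔ SumInTwoLambda B := ⟨h.sum, h.symm.sum⟩

/-- Existence of a Weyl element fixing `P` pointwise and taking `a` to `b`. -/
def Reach (P : Finset (Fin 8 → ℝ)) (a b : Fin 8 → ℝ) : Prop :=
  ∃ w : (Fin 8 → ℝ) ≃ₗ[ℝ] (Fin 8 → ℝ), IsWeyl w ∧ (∀ p ∈ P, w p = p) ∧ w a = b

theorem Reach.trans {P : Finset (Fin 8 → ℝ)} {a b c : Fin 8 → ℝ} (h : Reach P a b)
    (h' : Reach P b c) : Reach P a c := by
  obtain ⟨w, hw, h1, h2⟩ := h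
  obtain ⟨v, hv, h3, h4⟩ := h'
  exact ⟨w.trans v, hw.trans hv, fun p hp => by simp [h1 p hp, h3 p hp], by simp [h2, h4]⟩

theorem Reach.mono {P Q : Finset (Fin 8 → ℝ)} {a b : Fin 8 → ℝ} (hQ : Q ⊆ P) (h : Reach P a b) :
    Reach Q a b := by
  obtain ⟨w, hw, h1, h2⟩ := h
  exact ⟨w, hw, fun p hp => h1 p (hQ hp), h2⟩

theorem reach_refl {P : Finset (Fin 8 → ℝ)} {r : Fin 8 → ℝ} (hr : isRoot r)
    (hP : ∀ p ∈ P, dot p r = 0) (a : Fin 8 → ℝ) : Reach P a (a - dot a r • r) :=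
  ⟨reflE hr, reflE_weyl hr, fun p hp => by simp [reflE_apply, hP p hp], rfl⟩

theorem reach_pos {P : Finset (Fin 8 → ℝ)} {a b : Fin 8 → ℝ} (ha : isRoot a) (hb : isRoot b)
    (hPa : ∀ p ∈ P, dot p a = 0) (hPb : ∀ p ∈ P, dot p b = 0) (h : 0 < dot a b) :
    Reach P a b := by
  obtain ⟨n, hn⟩ := dot_int ha.1 hb.1
  have hd : dot (a - b) (a - b) = 4 - 2 * n := by
    simp only [dot_sub_left, dot_sub_right, ha.2, hb.2, dot_comm b a, hn]
    ring
  have h1 : (n : ℝ) ≤ 2 := by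
    have := dot_self_nonneg (a - b)
    linarith
  have h2 : n ≤ 2 := by exact_mod_cast h1
  have h3 : 0 < n := by rw [hn] at h; exact_mod_cast h
  have h4 : n = 1 ∨ n = 2 := by omega
  rcases h4 with rfl | rfl
  · have hr : isRoot (a - b) := by
      refine ⟨?_, by rw [hd]; norm_num⟩
      have := inLambda_sub_zsmul ha.1 hb.1 1
      simpa using this
    have := reach_refl (P := P) hr (fun p hp => by rw [dot_sub_right, hPa p hp, hPb p hp, sub_self]) a
    rw [dot_sub_right, ha.2, hn] at this
    convert this using 1
    norm_num
  · have : a - b = 0 := eq_zero_of_dot (by rw [hd]; norm_num)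
    rw [sub_eq_zero] at this
    subst this
    exact ⟨LinearEquiv.refl ℝ _, weyl_refl, fun _ _ => rfl, rfl⟩

theorem reach_ne {P : Finset (Fin 8 → ℝ)} {a b : Fin 8 → ℝ} (ha : isRoot a) (hb : isRoot b)
    (hPa : ∀ p ∈ P, dot p a = 0) (hPb : ∀ p ∈ P, dot p b = 0) (h : dot a b ≠ 0) :
    Reach P a b := by
  rcases lt_or_gt_of_ne h with h | h
  · refine (reach_refl hb hPb a).trans (reach_pos (reflMap_root hb ha) hb ?_ hPb ?_)
    · intro p hp
      rw [dot_sub_right, dot_smul_right, hPa p hp, hPb p hp]; ring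
    · rw [dot_sub_left, dot_smul_left, hb.2]; linarith
  · exact reach_pos ha hb hPa hPb h

open Classical in
def stdS (P : List (List ℤ)) : Finset (Fin 8 → ℝ) := (P.map toR).toFinset

theorem mem_stdS {P : List (List ℤ)} {x : Fin 8 → ℝ} : x ∈ stdS P ↔ ∃ p ∈ P, toR p = x := by
  simp [stdS]

def OrthTo (P : Finset (Fin 8 → ℝ)) (h : Fin 8 → ℝ) : Prop :=
  isRoot h ∧ ∀ p ∈ P, dot p h = 0

theorem mem_orthL {P : List (List ℤ)} {l : List ℤ} :
    l ∈ orthL P ↔ l ∈ rootL ∧ ∀ p ∈ P, ldot p l = 0 := by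
  simp [orthL]

theorem ldot_zero_iff {l m : List ℤ} (h : l.length = 8) (h' : m.length = 8) :
    ldot l m = 0 ↔ dot (toR l) (toR m) = 0 := by
  rw [dot_toR h h']
  constructor
  · intro h; rw [h]; simp
  · intro h
    have : (ldot l m : ℝ) = 0 := by linarith
    exact_mod_cast this

theorem orthTo_iff {P : List (List ℤ)} (hP : ∀ p ∈ P, p.length = 8) {h : Fin 8 → ℝ} :
    OrthTo (stdS P) h ↔ ∃ l ∈ orthL P, toR l = h := by
  constructor
  · rintro ⟨h1, h2⟩
    obtain ⟨l, hl, rfl⟩ := exists_of_isRoot h1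
    refine ⟨l, mem_orthL.2 ⟨hl, fun p hp => ?_⟩, rfl⟩
    rw [ldot_zero_iff (hP p hp) (okL_of hl).1]
    exact h2 _ (mem_stdS.2 ⟨p, hp, rfl⟩)
  · rintro ⟨l, hl, rfl⟩
    obtain ⟨h1, h2⟩ := mem_orthL.1 hl
    refine ⟨isRoot_toR h1, fun x hx => ?_⟩
    obtain ⟨p, hp, rfl⟩ := mem_stdS.1 hx
    rw [← ldot_zero_iff (hP p hp) (okL_of h1).1]
    exact h2 p hp

theorem reach_chk {P : List (List ℤ)} (hP : ∀ p ∈ P, p.length = 8) {t : List ℤ}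
    (ht : t ∈ orthL P) (hc : chk P t = true) {h : Fin 8 → ℝ} (hh : OrthTo (stdS P) h) :
    Reach (stdS P) h (toR t) := by
  have htO : OrthTo (stdS P) (toR t) := (orthTo_iff hP).2 ⟨t, ht, rfl⟩
  have htl := (okL_of (mem_orthL.1 ht).1).1
  obtain ⟨l, hl, rfl⟩ := (orthTo_iff hP).1 hh
  have hll := (okL_of (mem_orthL.1 hl).1).1
  have := List.all_eq_true.1 hc l hl
  simp only [Bool.or_eq_true, List.any_eq_true, Bool.and_eq_true, bne_iff_ne] at this
  rcases this with h | ⟨c, hcO, h1, h2⟩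
  · exact reach_ne hh.1 htO.1 hh.2 htO.2 (by rwa [Ne, ← ldot_zero_iff hll htl])
  · have hcO' : OrthTo (stdS P) (toR c) := (orthTo_iff hP).2 ⟨c, hcO, rfl⟩
    have hcl := (okL_of (mem_orthL.1 hcO).1).1
    exact (reach_ne hh.1 hcO'.1 hh.2 hcO'.2 (by rwa [Ne, ← ldot_zero_iff hll hcl])).trans
      (reach_ne hcO'.1 htO.1 hcO'.2 htO.2 (by rwa [Ne, ← ldot_zero_iff hcl htl]))

open Classical in
theorem we_insert {P K : Finset (Fin 8 → ℝ)} {w : (Fin 8 → ℝ) ≃ₗ[ℝ] (Fin 8 → ℝ)} (hw : IsWeyl w)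
    (e : ⇑w '' (K : Set (Fin 8 → ℝ)) = (P : Set (Fin 8 → ℝ))) (h : Fin 8 → ℝ) :
    WE (insert h K) (insert (w h) P) :=
  ⟨w, hw, by rw [Finset.coe_insert, Set.image_insert_eq, e, Finset.coe_insert]⟩

open Classical in
theorem we_reach {P : Finset (Fin 8 → ℝ)} {a b : Fin 8 → ℝ} (h : Reach P a b) :
    WE (insert a P) (insert b P) := by
  obtain ⟨w, hw, h1, rfl⟩ := h
  refine we_insert hw ?_ a
  ext x
  constructor
  · rintro ⟨p, hp, rfl⟩
    rw [h1 p hp]; exact hp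
  · intro hx
    exact ⟨x, hx, h1 x hx⟩

theorem IsWeyl.orthTo {P K : Finset (Fin 8 → ℝ)} {w : (Fin 8 → ℝ) ≃ₗ[ℝ] (Fin 8 → ℝ)} (hw : IsWeyl w)
    (e : ⇑w '' (K : Set (Fin 8 → ℝ)) = (P : Set (Fin 8 → ℝ))) {h : Fin 8 → ℝ} :
    OrthTo P (w h) ↔ OrthTo K h := by
  rw [img_eq e]
  simp only [OrthTo, hw.root_iff, Finset.mem_map]
  refine and_congr_right fun _ => ⟨fun H p hp => ?_, ?_⟩
  · rw [← hw.1]; exact H _ ⟨p, hp, rfl⟩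
  · rintro H _ ⟨p, hp, rfl⟩
    exact (hw.1 p h).trans (H p hp)

theorem orth_not_mem {K : Finset (Fin 8 → ℝ)} {h : Fin 8 → ℝ} (hh : OrthTo K h) : h ∉ K := by
  intro hm
  have := hh.2 h hm
  rw [hh.1.2] at this
  norm_num at this

open Classical in
theorem orthSet_insert {k : ℕ} {K : Finset (Fin 8 → ℝ)} (hK : OrthSet k K) {h : Fin 8 → ℝ}
    (hh : OrthTo K h) : OrthSet (k + 1) (insert h K) := by
  refine ⟨by rw [Finset.card_insert_of_notMem (orth_not_mem hh), hK.1], ?_, ?_⟩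
  · intro e he
    rcases Finset.mem_insert.1 he with rfl | he
    · exact hh.1
    · exact hK.2.1 e he
  · intro e he f hf hef
    rcases Finset.mem_insert.1 he with h1 | h1 <;> rcases Finset.mem_insert.1 hf with h2 | h2
    · exact absurd (h1.trans h2.symm) hef
    · rw [dot_comm, h1]; exact hh.2 f h2
    · rw [h2]; exact hh.2 e h1
    · exact hK.2.2 e h1 f h2 hef

theorem orthSet_sub {k : ℕ} {K K' : Finset (Fin 8 → ℝ)} (hK' : OrthSet (k + 1) K') (hs : K ⊆ K')
    (hc : K.card = k) : OrthSet k K :=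
  ⟨hc, fun e he => hK'.2.1 e (hs he), fun e he f hf => hK'.2.2 e (hs he) f (hs hf)⟩

open Classical in
theorem orthSet_super {k : ℕ} {K K' : Finset (Fin 8 → ℝ)} (hK' : OrthSet (k + 1) K') (hs : K ⊆ K')
    (hc : K.card = k) : ∃ h, OrthTo K h ∧ insert h K = K' := by
  obtain ⟨h, hn, e⟩ := Finset.exists_eq_insert_iff.2 ⟨hs, by rw [hc, hK'.1]⟩
  subst e
  refine ⟨h, ⟨hK'.2.1 h (by simp), fun p hp => hK'.2.2 p (by simp [hp]) h (by simp) ?_⟩, rfl⟩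
  rintro rfl; exact hn hp

/-- all `k`-sets are equivalent to the standard one -/
def StdTrans (k : ℕ) (P : List (List ℤ)) : Prop :=
  OrthSet k (stdS P) ∧ ∀ K, OrthSet k K → WE K (stdS P)

theorem stdS_cons [DecidableEq (Fin 8 → ℝ)] (t : List ℤ) (P : List (List ℤ)) :
    stdS (t :: P) = insert (toR t) (stdS P) := by
  ext x
  simp [stdS]

theorem trans_split {k : ℕ} {P : List (List ℤ)} (hT : StdTrans k P) [DecidableEq (Fin 8 → ℝ)]
    {K : Finset (Fin 8 → ℝ)} (hK : OrthSet (k + 1) K) :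
    ∃ h, OrthTo (stdS P) h ∧ WE K (insert h (stdS P)) := by
  obtain ⟨K0, h0, hc⟩ := Finset.exists_subset_card_eq (s := K) (n := k) (by rw [hK.1]; omega)
  obtain ⟨h, hh, e⟩ := orthSet_super hK h0 hc
  obtain ⟨w, hw, e'⟩ := hT.2 K0 (orthSet_sub hK h0 hc)
  refine ⟨w h, (hw.orthTo e').2 hh, ?_⟩
  rw [← e]
  convert we_insert hw e' h

theorem trans_step {k : ℕ} {P : List (List ℤ)} (hT : StdTrans k P) (hP : ∀ p ∈ P, p.length = 8)
    {t : List ℤ} (ht : t ∈ orthL P) (hc : chk P t = true) : StdTrans (k + 1) (t :: P) := by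
  classical
  constructor
  · rw [stdS_cons]
    convert orthSet_insert hT.1 ((orthTo_iff hP).2 ⟨t, ht, rfl⟩)
  · intro K hK
    obtain ⟨h, hh, hw⟩ := trans_split hT hK
    refine hw.trans ?_
    rw [stdS_cons]
    convert we_reach (reach_chk hP ht hc hh)

theorem trans0 : StdTrans 0 [] := by
  have e : stdS [] = ∅ := by simp [stdS]
  refine ⟨by simp [OrthSet, e], fun K hK => ?_⟩
  have : K = ∅ := Finset.card_eq_zero.1 hK.1
  subst this
  exact ⟨LinearEquiv.refl ℝ _, weyl_refl, by simp [e]⟩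

theorem trans1 : StdTrans 1 [v1] := trans_step trans0 (by simp) mem1 chk0
theorem trans2 : StdTrans 2 [v2, v1] := trans_step trans1 (by decide) mem2 chk1
theorem trans3 : StdTrans 3 [v3, v2, v1] := trans_step trans2 (by decide) mem3 chk2

theorem StdTrans.we {k : ℕ} {P : List (List ℤ)} (hT : StdTrans k P) {K1 K2 : Finset (Fin 8 → ℝ)}
    (h1 : OrthSet k K1) (h2 : OrthSet k K2) : WE K1 K2 := (hT.2 _ h1).trans (hT.2 _ h2).symm

open Classical in
def rootF : Finset (Fin 8 → ℝ) := stdS rootL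

theorem mem_rootF {a : Fin 8 → ℝ} : a ∈ rootF ↔ isRoot a := by
  rw [rootF, mem_stdS]
  exact ⟨by rintro ⟨l, hl, rfl⟩; exact isRoot_toR hl, exists_of_isRoot⟩

open Classical in
def OF (k : ℕ) (Q : Finset (Fin 8 → ℝ) → Prop) : Finset (Finset (Fin 8 → ℝ)) :=
  (rootF.powersetCard k).filter (fun K => OrthSet k K ∧ Q K)

theorem mem_OF {k : ℕ} {Q : Finset (Fin 8 → ℝ) → Prop} {K : Finset (Fin 8 → ℝ)} :
    K ∈ OF k Q ↔ OrthSet k K ∧ Q K := by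
  simp only [OF, Finset.mem_filter, Finset.mem_powersetCard, and_iff_right_iff_imp]
  exact fun h => ⟨fun e he => mem_rootF.2 (h.1.2.1 e he), h.1.1⟩

theorem ncard_OF (k : ℕ) (Q : Finset (Fin 8 → ℝ) → Prop) :
    {K | OrthSet k K ∧ Q K}.ncard = (OF k Q).card := by
  rw [← Set.ncard_coe_finset]
  congr 1
  ext K
  simp [mem_OF]

open Classical in
def ext (K : Finset (Fin 8 → ℝ)) (Q : Finset (Fin 8 → ℝ) → Prop) : Finset (Fin 8 → ℝ) :=
  rootF.filter (fun h => OrthTo K h ∧ Q (insert h K))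

open Classical in
theorem mem_ext {K : Finset (Fin 8 → ℝ)} {Q : Finset (Fin 8 → ℝ) → Prop} {h : Fin 8 → ℝ} :
    h ∈ ext K Q ↔ OrthTo K h ∧ Q (insert h K) := by
  simp only [ext, Finset.mem_filter, mem_rootF, and_iff_right_iff_imp]
  exact fun h => h.1.1

theorem count_step {k c : ℕ} (k' : ℕ) (hk : k' = k + 1) {P : List (List ℤ)} (hT : StdTrans k P)
    {Q : Finset (Fin 8 → ℝ) → Prop} (hQ : ∀ A B, WE A B → (Q A ↔ Q B))
    (hc : (ext (stdS P) Q).card = c) :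
    (OF k fun _ => True).card * c = (OF k' Q).card * k' := by
  classical
  subst hk
  apply Finset.card_mul_eq_card_mul (fun K K' : Finset (Fin 8 → ℝ) => K ⊆ K')
  · intro K hK
    rw [mem_OF] at hK
    have e1 : Finset.bipartiteAbove (fun K K' : Finset (Fin 8 → ℝ) => K ⊆ K') (OF (k + 1) Q) K
        = (ext K Q).image (fun h => insert h K) := by
      ext K'
      simp only [Finset.mem_bipartiteAbove, mem_OF, Finset.mem_image, mem_ext]
      constructor
      · rintro ⟨⟨h1, h2⟩, h3⟩
        obtain ⟨h, hh, e⟩ := orthSet_super h1 h3 hK.1.1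
        have e' : insert h K = K' := by convert e
        refine ⟨h, ⟨hh, ?_⟩, e'⟩
        convert h2
      · rintro ⟨h, ⟨hh, hq⟩, rfl⟩
        refine ⟨⟨?_, ?_⟩, Finset.subset_insert _ _⟩
        · convert orthSet_insert hK.1 hh
        · convert hq
    rw [e1, Finset.card_image_of_injOn, ← hc]
    · obtain ⟨w, hw, e⟩ := hT.2 K hK.1
      refine Finset.card_bij' (fun h _ => w h) (fun h _ => w.symm h) ?_ ?_ (by simp) (by simp)
      · intro h hh
        rw [mem_ext] at hh ⊢
        exact ⟨(hw.orthTo e).2 hh.1, (hQ _ _ (we_insert hw e h)).1 hh.2⟩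
      · intro h hh
        obtain ⟨g, rfl⟩ := w.surjective h
        rw [mem_ext] at hh
        rw [w.symm_apply_apply, mem_ext]
        exact ⟨(hw.orthTo e).1 hh.1, (hQ _ _ (we_insert hw e g)).2 hh.2⟩
    · intro a ha b hb hab
      rw [Finset.mem_coe, mem_ext] at ha hb
      have : a ∈ insert b K := by
        rw [← show insert a K = insert b K from hab]; simp
      exact (Finset.mem_insert.1 this).resolve_right (orth_not_mem ha.1)
  · intro K' hK'
    rw [mem_OF] at hK'
    have e1 : Finset.bipartiteBelow (fun K K' : Finset (Fin 8 → ℝ) => K ⊆ K')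
        (OF k fun _ => True) K' = K'.powersetCard k := by
      ext K
      simp only [Finset.mem_bipartiteBelow, mem_OF, Finset.mem_powersetCard, and_true]
      exact ⟨fun h => ⟨h.2, h.1.1⟩, fun h => ⟨orthSet_sub hK'.1 h.1 h.2, h.1⟩⟩
    rw [e1, Finset.card_powersetCard, hK'.1.1]
    simp

theorem card_of_list {s : Finset (Fin 8 → ℝ)} {L : List (List ℤ)} (hsub : L.Sublist rootL)
    (h : ∀ x, x ∈ s ↔ ∃ l ∈ L, toR l = x) : s.card = L.length := by
  classical
  have e : s = (L.map toR).toFinset := by ext x; simp [h]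
  rw [e, List.toFinset_card_of_nodup, List.length_map]
  refine List.Nodup.map_on ?_ (nodup_rootL.sublist hsub)
  intro x hx y hy
  exact toR_inj (okL_of (hsub.subset hx)).1 (okL_of (hsub.subset hy)).1

theorem card_ext (P : List (List ℤ)) (hP : ∀ p ∈ P, p.length = 8) :
    (ext (stdS P) fun _ => True).card = (orthL P).length := by
  apply card_of_list List.filter_sublist
  intro x
  rw [mem_ext, and_true, orthTo_iff hP]
  rfl

theorem count0 : (OF 0 fun _ => True).card = 1 := by
  rw [Finset.card_eq_one]
  refine ⟨∅, ?_⟩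
  ext K
  rw [mem_OF]
  simp only [and_true, Finset.mem_singleton]
  exact ⟨fun h => Finset.card_eq_zero.1 h.1, fun h => by subst h; simp [OrthSet]⟩

theorem count1 : (OF 1 fun _ => True).card = 240 := by
  have : (OF 0 fun _ => True).card * 240 = (OF 1 fun _ => True).card * 1 :=
    count_step 1 rfl trans0 (Q := fun _ => True) (by simp) ((card_ext _ (by simp)).trans cnt0)
  rw [count0] at this; omega
theorem count2 : (OF 2 fun _ => True).card = 15120 := by
  have : (OF 1 fun _ => True).card * 126 = (OF 2 fun _ => True).card * 2 :=
    count_step 2 rfl trans1 (Q := fun _ => True) (by simp) ((card_ext _ (by decide)).trans cnt1)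
  rw [count1] at this; omega
theorem count3 : (OF 3 fun _ => True).card = 302400 := by
  have : (OF 2 fun _ => True).card * 60 = (OF 3 fun _ => True).card * 3 :=
    count_step 3 rfl trans2 (Q := fun _ => True) (by simp) ((card_ext _ (by decide)).trans cnt2)
  rw [count2] at this; omega
theorem count4 : (OF 4 fun _ => True).card = 1965600 := by
  have : (OF 3 fun _ => True).card * 26 = (OF 4 fun _ => True).card * 4 :=
    count_step 4 rfl trans3 (Q := fun _ => True) (by simp) ((card_ext _ (by decide)).trans cnt3)
  rw [count3] at this; omega

open Classical in
theorem four_cases {h : Fin 8 → ℝ} (hh : OrthTo (stdS [v3, v2, v1]) h) :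
    (dot (toR v4) h ≠ 0 ∧ WE (insert h (stdS [v3, v2, v1])) (stdS [v4, v3, v2, v1])) ∨
    (dot (toR v4) h = 0 ∧ WE (insert h (stdS [v3, v2, v1])) (stdS [v5, v3, v2, v1])) := by
  by_cases h0 : dot (toR v4) h = 0
  · right
    refine ⟨h0, ?_⟩
    have hh' : OrthTo (stdS [v4, v3, v2, v1]) h := by
      refine ⟨hh.1, ?_⟩
      rw [stdS_cons]
      simp only [Finset.forall_mem_insert]
      exact ⟨h0, hh.2⟩
    have := (reach_chk (by decide) mem5 chk3 hh').mono (Q := stdS [v3, v2, v1])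
      (by rw [stdS_cons v4]; exact Finset.subset_insert _ _)
    rw [stdS_cons v5]
    exact we_reach this
  · left
    refine ⟨h0, ?_⟩
    rw [stdS_cons v4]
    have h4 : OrthTo (stdS [v3, v2, v1]) (toR v4) := (orthTo_iff (by decide)).2 ⟨v4, mem4, rfl⟩
    exact we_reach (reach_ne hh.1 h4.1 hh.2 h4.2 (by rwa [dot_comm]))

theorem sum_stdS {P : List (List ℤ)} (hn : P.Nodup) (hP : ∀ p ∈ P, p.length = 8) :
    ∑ e ∈ stdS P, e = (P.map toR).sum := by
  classical
  have : stdS P = P.toFinset.image toR := by ext x; simp [stdS]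
  rw [this, Finset.sum_image, List.sum_toFinset _ hn]
  intro x hx y hy
  exact toR_inj (hP x (by simpa using hx)) (hP y (by simpa using hy))

theorem sum4 : SumInTwoLambda (stdS [v4, v3, v2, v1]) := by
  refine ⟨toR [2, 0, 2, 0, 0, 0, 0, 0], (isRoot_toR (by decide +kernel)).1, ?_⟩
  rw [sum_stdS (by decide) (by decide)]
  funext i
  fin_cases i <;> simp [toR, v1, v2, v3, v4] <;> norm_num

theorem sum5 : ¬ SumInTwoLambda (stdS [v5, v3, v2, v1]) := by
  rintro ⟨x, ⟨hx, -⟩, h⟩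
  rw [sum_stdS (by decide) (by decide)] at h
  have h0 := congrFun h 0
  have h2 := congrFun h 2
  simp [toR, v1, v2, v3, v5] at h0 h2
  rcases hx with hx | hx
  · obtain ⟨n, hn⟩ := hx 2
    rw [hn] at h2
    have : (1 : ℤ) = 2 * n := by exact_mod_cast h2
    omega
  · obtain ⟨n, hn⟩ := hx 0
    have : (1 : ℝ) = 2 * n + 1 - 1 + 0 * x 0 := by linarith
    have : (1 : ℤ) = 2 * n := by
      have h' : (1 : ℝ) = 2 * n := by linarith
      exact_mod_cast h'
    omega

theorem card_ext4 : (ext (stdS [v3, v2, v1]) SumInTwoLambda).card = 2 := by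
  classical
  rw [← cnt4]
  refine card_of_list (List.filter_sublist.trans List.filter_sublist) ?_
  intro x
  rw [mem_ext]
  have key : ∀ l ∈ orthL [v3, v2, v1],
      (SumInTwoLambda (insert (toR l) (stdS [v3, v2, v1])) ↔ ldot v4 l ≠ 0) := by
    intro l hl
    rw [Ne, ldot_zero_iff rfl (okL_of (mem_orthL.1 hl).1).1]
    rcases four_cases ((orthTo_iff (by decide)).2 ⟨l, hl, rfl⟩) with ⟨h1, h2⟩ | ⟨h1, h2⟩
    · have := h2.sum_iff.2 sum4
      exact ⟨fun _ => h1, fun _ => by convert this⟩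
    · have := fun h => sum5 (h2.sum_iff.1 h)
      refine ⟨fun h => (this ?_).elim, fun h => (h h1).elim⟩
      convert h
  constructor
  · rintro ⟨h1, h2⟩
    obtain ⟨l, hl, rfl⟩ := (orthTo_iff (by decide)).1 h1
    refine ⟨l, List.mem_filter.2 ⟨hl, ?_⟩, rfl⟩
    rw [bne_iff_ne]
    exact (key l hl).1 (by convert h2)
  · rintro ⟨l, hl, rfl⟩
    obtain ⟨hl, h2⟩ := List.mem_filter.1 hl
    rw [bne_iff_ne] at h2
    refine ⟨(orthTo_iff (by decide)).2 ⟨l, hl, rfl⟩, ?_⟩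
    convert (key l hl).2 h2

theorem count4s : (OF 4 SumInTwoLambda).card = 151200 := by
  have : (OF 3 fun _ => True).card * 2 = (OF 4 SumInTwoLambda).card * 4 :=
    count_step 4 rfl trans3 (Q := SumInTwoLambda) (fun _ _ h => h.sum_iff) card_ext4
  rw [count3] at this; omega

theorem count4n : (OF 4 fun K => ¬ SumInTwoLambda K).card = 1814400 := by
  classical
  have h1 : OF 4 SumInTwoLambda = (OF 4 fun _ => True).filter SumInTwoLambda := by
    ext K; simp [mem_OF]
  have h2 : (OF 4 fun K => ¬ SumInTwoLambda K) =
      (OF 4 fun _ => True).filter (fun K => ¬ SumInTwoLambda K) := by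
    ext K; simp [mem_OF]
  have := Finset.card_filter_add_card_filter_not (s := OF 4 fun _ => True) SumInTwoLambda
  rw [← h1, ← h2, count4, count4s] at this
  omega

theorem ncard_all (k : ℕ) : {K | OrthSet k K}.ncard = (OF k fun _ => True).card := by
  rw [← ncard_OF]; simp

theorem four_class {K : Finset (Fin 8 → ℝ)} (hK : OrthSet 4 K) :
    (SumInTwoLambda K ∧ WE K (stdS [v4, v3, v2, v1])) ∨
    (¬ SumInTwoLambda K ∧ WE K (stdS [v5, v3, v2, v1])) := by
  classical
  obtain ⟨h, hh, hw⟩ := trans_split trans3 hK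
  rcases four_cases hh with ⟨-, h2⟩ | ⟨-, h2⟩
  · have : WE K (stdS [v4, v3, v2, v1]) := hw.trans (by convert h2)
    exact Or.inl ⟨this.sum_iff.2 sum4, this⟩
  · have : WE K (stdS [v5, v3, v2, v1]) := hw.trans (by convert h2)
    exact Or.inr ⟨fun h => sum5 (this.sum_iff.1 h), this⟩

/-- (i) There are exactly 15120 two-element sets of pairwise
orthogonal roots and `W` acts transitively on them; (ii) there are exactly 302400
three-element such sets and `W` acts transitively on them; (iii) there are exactly
1965600 four-element such sets, forming exactly two `W`-orbits: one of size 151200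
(sets whose elements sum to a vector in `2Λ`) and one of size 1814400 (sets whose
elements sum to a vector not in `2Λ`). -/
theorem stmt_13 :
    ({K : Finset (Fin 8 → ℝ) | OrthSet 2 K}.ncard = 15120 ∧
      ∀ K1 K2 : Finset (Fin 8 → ℝ), OrthSet 2 K1 → OrthSet 2 K2 →
        ∃ w : (Fin 8 → ℝ) ≃ₗ[ℝ] (Fin 8 → ℝ), IsWeyl w ∧
          ⇑w '' (K1 : Set (Fin 8 → ℝ)) = (K2 : Set (Fin 8 → ℝ))) ∧
    ({K : Finset (Fin 8 → ℝ) | OrthSet 3 K}.ncard = 302400 ∧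
      ∀ K1 K2 : Finset (Fin 8 → ℝ), OrthSet 3 K1 → OrthSet 3 K2 →
        ∃ w : (Fin 8 → ℝ) ≃ₗ[ℝ] (Fin 8 → ℝ), IsWeyl w ∧
          ⇑w '' (K1 : Set (Fin 8 → ℝ)) = (K2 : Set (Fin 8 → ℝ))) ∧
    ({K : Finset (Fin 8 → ℝ) | OrthSet 4 K}.ncard = 1965600 ∧
      {K : Finset (Fin 8 → ℝ) | OrthSet 4 K ∧ SumInTwoLambda K}.ncard = 151200 ∧
      {K : Finset (Fin 8 → ℝ) | OrthSet 4 K ∧ ¬SumInTwoLambda K}.ncard = 1814400 ∧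
      ∀ K1 K2 : Finset (Fin 8 → ℝ), OrthSet 4 K1 → OrthSet 4 K2 →
        ((∃ w : (Fin 8 → ℝ) ≃ₗ[ℝ] (Fin 8 → ℝ), IsWeyl w ∧
            ⇑w '' (K1 : Set (Fin 8 → ℝ)) = (K2 : Set (Fin 8 → ℝ))) ↔
          (SumInTwoLambda K1 ↔ SumInTwoLambda K2))) := by
  refine ⟨⟨(ncard_all 2).trans count2, fun K1 K2 h1 h2 => trans2.we h1 h2⟩,
    ⟨(ncard_all 3).trans count3, fun K1 K2 h1 h2 => trans3.we h1 h2⟩,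
    (ncard_all 4).trans count4, (ncard_OF 4 _).trans count4s, (ncard_OF 4 _).trans count4n, ?_⟩
  intro K1 K2 h1 h2
  refine ⟨fun h => WE.sum_iff h, fun h => ?_⟩
  rcases four_class h1 with ⟨a, b⟩ | ⟨a, b⟩ <;> rcases four_class h2 with ⟨c, d⟩ | ⟨c, d⟩
  · exact b.trans d.symm
  · exact absurd (h.1 a) c
  · exact absurd (h.2 c) a
  · exact b.trans d.symm
end
end
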